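/- Let d ≥ 1 and let Φ be a complex-valued Schwartz function on ℝ^d with ∫_{ℝ^d} Φ = 0 which is nondegenerate, i.e. for every ξ ∈ ℝ^d \ {0} there exists ε > 0 with Φ̂(εξ) ≠ 0. There is a constant C depending only on d and Φ with the following property. Let N ≥ 0 and let f : ℝ^d → ℂ be measurable with ∫_{ℝ^d} |f(t)|²/(1+|t|)^{d+1} dt < ∞ and such that for every ball B ⊂ ℝ^d of radius r: ∫_B ∫_0^r |Φ_ε * f(s)|² (dε/ε) ds ≤ N² |B|. Then for every ball B ⊂ ℝ^d, (1/|B|) ∫_B |f(t) − f_B|² dt ≤ C N², where f_B = (1/|B|)∫_B f. -/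

import Mathlib

open MeasureTheory Real FourierTransform Complex

noncomputable section

/-- `ℝ^d`. -/
abbrev Ed (d : ℕ) := EuclideanSpace ℝ (Fin d)

/-- Dilation `Φ_ε(s) = ε^{-d} Φ(s/ε)`. -/
def dil (d : ℕ) (Φ : Ed d → ℂ) (ε : ℝ) (s : Ed d) : ℂ :=
  ((ε : ℂ) ^ d)⁻¹ * Φ (ε⁻¹ • s)

/-- Convolution `g * f (s) = ∫ g(s-t) f(t) dt`. -/
def cnv (d : ℕ) (g f : Ed d → ℂ) (s : Ed d) : ℂ :=
  ∫ t, g (s - t) * f t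

/-- Mean of `f` over the ball of center `z` and radius `r`. -/
def avgB (d : ℕ) (f : Ed d → ℂ) (z : Ed d) (r : ℝ) : ℂ :=
  (volume (Metric.ball z r)).toReal⁻¹ • ∫ t in Metric.ball z r, f t

/-!
By translating and dilating, take the ball to be the unit ball `B`, and test `f` against
`h = 1_B conj(f - f_B)`, so that `∫ f h = ∫_B |f - f_B|² = ‖h‖²`. Nondegeneracy of `Φ` yields a
Schwartz function `Ψ` of mean zero and a Calderón reproducing formula that turns `∫ f h` into the
half-space pairing `∬ (Φ_ε * f)(Ψ_ε * h) ds dε/ε`. Apply Cauchy–Schwarz with a power of the box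
scale as weight: summing the Carleson hypothesis over dyadic boxes controls the `f` factor by `N²`,
while the square-function estimate near `B` and the decay of `Ψ_ε * h` away from `B`, due to the
cancellation of `h`, control the `h` factor by `‖h‖²`. Hence `‖h‖⁴ ≲ N² ‖h‖²`.

The reproducing formula is first truncated to `δ < ε ≤ R`, where it reproduces `p_δ - p_R` for a
Schwartz function `p` of integral one. Letting `δ → 0` recovers `∫ f h`, and letting `R → ∞` kills
the other term, again by the cancellation of `h`.
-/

section

open Set Filter Metric Topology
open scoped ENNReal NNReal SchwartzMap

section SchwartzDecay

variable {E F : Type*} [NormedAddCommGroup E] [NormedSpace ℝ E] [NormedAddCommGroup F]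
  [NormedSpace ℝ F]

lemma exists_norm_iteratedFDeriv_mul_one_add_pow_le (Θ : 𝓢(E, F)) (n M : ℕ) :
    ∃ C, 0 < C ∧ ∀ x, ‖iteratedFDeriv ℝ n Θ x‖ * (1 + ‖x‖) ^ M ≤ C := by
  refine ⟨2 ^ M * ((Finset.Iic (M, n)).sup fun m ↦ SchwartzMap.seminorm ℝ m.1 m.2) Θ + 1,
    by positivity, fun x ↦ ?_⟩
  rw [mul_comm]
  exact (SchwartzMap.one_add_le_sup_seminorm_apply (𝕜 := ℝ) (m := (M, n)) le_rfl le_rfl Θ x).trans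
    (le_add_of_nonneg_right zero_le_one)

lemma exists_norm_mul_one_add_pow_le (Θ : 𝓢(E, F)) (M : ℕ) :
    ∃ C, 0 < C ∧ ∀ x, ‖Θ x‖ * (1 + ‖x‖) ^ M ≤ C := by
  simpa only [norm_iteratedFDeriv_zero] using exists_norm_iteratedFDeriv_mul_one_add_pow_le Θ 0 M

lemma exists_norm_schwartz_le (Θ : 𝓢(E, F)) : ∃ C, 0 < C ∧ ∀ x, ‖Θ x‖ ≤ C := by
  simpa using exists_norm_mul_one_add_pow_le Θ 0

lemma exists_norm_smul_mul_one_add_pow_le (Θ : 𝓢(E, F)) (M : ℕ) {m : ℝ} (hm : 0 < m) :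
    ∃ C, 0 < C ∧ ∀ a x, m ≤ a → ‖Θ (a • x)‖ * (1 + ‖x‖) ^ M ≤ C := by
  obtain ⟨C, hC, hΘ⟩ := exists_norm_mul_one_add_pow_le Θ M
  refine ⟨C * (1 + m⁻¹) ^ M, by positivity, fun a x ha ↦ ?_⟩
  have hx : 1 + ‖x‖ ≤ (1 + ‖a • x‖) * (1 + m⁻¹) := by
    rw [norm_smul, Real.norm_of_nonneg (hm.le.trans ha)]
    have : ‖x‖ ≤ a * ‖x‖ * m⁻¹ := by
      rw [le_mul_inv_iff₀ hm, mul_comm]; gcongr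
    nlinarith [mul_nonneg (hm.le.trans ha) (norm_nonneg x), inv_pos.2 hm]
  calc ‖Θ (a • x)‖ * (1 + ‖x‖) ^ M ≤ ‖Θ (a • x)‖ * ((1 + ‖a • x‖) * (1 + m⁻¹)) ^ M := by gcongr
    _ = ‖Θ (a • x)‖ * (1 + ‖a • x‖) ^ M * (1 + m⁻¹) ^ M := by rw [mul_pow, mul_assoc]
    _ ≤ C * (1 + m⁻¹) ^ M := by gcongr; exact hΘ _

lemma exists_norm_sub_mul_one_add_pow_le (Θ : 𝓢(E, F)) (M : ℕ) :
    ∃ C, 0 < C ∧ ∀ a b, ‖b - a‖ ≤ (1 + ‖a‖) / 2 →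
      ‖Θ b - Θ a‖ * (1 + ‖a‖) ^ M ≤ C * ‖b - a‖ := by
  obtain ⟨C, hC, hΘ⟩ := exists_norm_iteratedFDeriv_mul_one_add_pow_le Θ 1 M
  simp only [norm_iteratedFDeriv_one] at hΘ
  refine ⟨C * 2 ^ M, by positivity, fun a b hab ↦ ?_⟩
  suffices ‖Θ b - Θ a‖ ≤ C * 2 ^ M / (1 + ‖a‖) ^ M * ‖b - a‖ by
    rwa [div_mul_eq_mul_div, le_div_iff₀ (by positivity)] at this
  refine (convex_segment a b).norm_image_sub_le_of_norm_fderiv_le (𝕜 := ℝ)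
    (fun x _ ↦ Θ.differentiable.differentiableAt) (fun x hx ↦ ?_)
    (left_mem_segment ℝ a b) (right_mem_segment ℝ a b)
  have hxa : 1 + ‖a‖ ≤ (1 + ‖x‖) * 2 := by
    have : ‖x - a‖ ≤ ‖b - a‖ := norm_sub_le_of_mem_segment hx
    linarith [norm_le_norm_add_norm_sub x a]
  rw [le_div_iff₀ (by positivity)]
  calc ‖fderiv ℝ Θ x‖ * (1 + ‖a‖) ^ M ≤ ‖fderiv ℝ Θ x‖ * ((1 + ‖x‖) * 2) ^ M := by gcongr
    _ = ‖fderiv ℝ Θ x‖ * (1 + ‖x‖) ^ M * 2 ^ M := by rw [mul_pow, mul_assoc]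
    _ ≤ C * 2 ^ M := by gcongr; exact hΘ x

end SchwartzDecay

section Dilation

variable {d : ℕ} {ε : ℝ}

lemma norm_dil (Θ : Ed d → ℂ) (hε : 0 < ε) (x : Ed d) :
    ‖dil d Θ ε x‖ = (ε ^ d)⁻¹ * ‖Θ (ε⁻¹ • x)‖ := by
  simp [dil, abs_of_pos hε]

lemma one_add_norm_inv_smul (hε : 0 < ε) (x : Ed d) : 1 + ‖ε⁻¹ • x‖ = (ε + ‖x‖) / ε := by
  rw [norm_smul, norm_inv, Real.norm_of_nonneg hε.le]
  field_simp

lemma exists_norm_dil_le (Θ : 𝓢(Ed d, ℂ)) (j : ℕ) :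
    ∃ C, 0 < C ∧ ∀ ε x, 0 < ε → ‖dil d Θ ε x‖ ≤ C * ε ^ j / (ε + ‖x‖) ^ (d + j) := by
  obtain ⟨C, hC, hΘ⟩ := exists_norm_mul_one_add_pow_le Θ (d + j)
  refine ⟨C, hC, fun ε x hε ↦ ?_⟩
  have := hΘ (ε⁻¹ • x)
  rw [one_add_norm_inv_smul hε, div_pow, ← mul_div_assoc, div_le_iff₀ (by positivity)] at this
  rw [norm_dil _ hε, le_div_iff₀ (by positivity), mul_assoc, inv_mul_le_iff₀ (by positivity)]
  exact this.trans_eq (by ring)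

lemma exists_norm_dil_sub_dil_le (Θ : 𝓢(Ed d, ℂ)) (j : ℕ) :
    ∃ C, 0 < C ∧ ∀ (ε : ℝ) (s u : Ed d), 0 < ε → ‖u‖ ≤ (ε + ‖s‖) / 2 →
      ‖dil d Θ ε (s - u) - dil d Θ ε s‖ ≤ C * ε ^ j * ‖u‖ / (ε + ‖s‖) ^ (d + 1 + j) := by
  obtain ⟨C, hC, hΘ⟩ := exists_norm_sub_mul_one_add_pow_le Θ (d + 1 + j)
  refine ⟨C, hC, fun ε s u hε hu ↦ ?_⟩
  have norm_shift : ‖ε⁻¹ • (s - u) - ε⁻¹ • s‖ = ‖u‖ / ε := by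
    rw [← smul_sub, norm_smul, norm_inv, Real.norm_of_nonneg hε.le, sub_sub_cancel_left, norm_neg,
      inv_mul_eq_div]
  have := hΘ (ε⁻¹ • s) (ε⁻¹ • (s - u)) (by
    rw [norm_shift, one_add_norm_inv_smul hε, div_right_comm]; gcongr)
  rw [norm_shift, one_add_norm_inv_smul hε, div_pow, ← mul_div_assoc,
    div_le_iff₀ (by positivity)] at this
  have norm_dil_sub : ‖dil d Θ ε (s - u) - dil d Θ ε s‖
      = (ε ^ d)⁻¹ * ‖Θ (ε⁻¹ • (s - u)) - Θ (ε⁻¹ • s)‖ := by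
    simp [dil, ← mul_sub, abs_of_pos hε]
  rw [norm_dil_sub, le_div_iff₀ (by positivity), mul_assoc, inv_mul_le_iff₀ (by positivity)]
  refine this.trans_eq ?_
  rw [pow_add, pow_add]
  field_simp

lemma exists_norm_dil_le_const (Θ : 𝓢(Ed d, ℂ)) (hε : 0 < ε) :
    ∃ C, 0 < C ∧ ∀ x, ‖dil d Θ ε x‖ ≤ C := by
  obtain ⟨C, hC, hΘ⟩ := exists_norm_schwartz_le Θ
  refine ⟨(ε ^ d)⁻¹ * C, by positivity, fun x ↦ ?_⟩
  rw [norm_dil _ hε]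
  gcongr
  exact hΘ _

lemma integrable_dil {Θ : Ed d → ℂ} (hΘ : Integrable Θ) (hε : 0 < ε) :
    Integrable (dil d Θ ε) :=
  (hΘ.comp_smul (inv_ne_zero hε.ne')).const_mul _

lemma continuous_dil {Θ : Ed d → ℂ} (hΘ : Continuous Θ) (ε : ℝ) : Continuous (dil d Θ ε) :=
  continuous_const.mul (hΘ.comp (continuous_const_smul _))

lemma measurable_dil {Θ : Ed d → ℂ} (hΘ : Measurable Θ) :
    Measurable fun p : ℝ × Ed d ↦ dil d Θ p.1 p.2 :=
  ((Complex.measurable_ofReal.comp measurable_fst).pow_const d).inv.mul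
    (hΘ.comp (measurable_fst.inv.smul measurable_snd))

lemma measurable_cnv_dil {Θ f : Ed d → ℂ} (hΘ : Measurable Θ) (hf : Measurable f) :
    Measurable fun p : ℝ × Ed d ↦ cnv d (dil d Θ p.1) f p.2 := by
  have : Measurable fun q : (ℝ × Ed d) × Ed d ↦ dil d Θ q.1.1 (q.1.2 - q.2) * f q.2 :=
    ((measurable_dil hΘ).comp
      (measurable_fst.fst.prodMk (measurable_fst.snd.sub measurable_snd))).mul
      (hf.comp measurable_snd)
  exact this.stronglyMeasurable.integral_prod_right.measurable

end Dilation

section Admissible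

variable {d : ℕ}

/-- The weight `(1 + |t|)^{-(d+1)}` of the growth condition on `f`; it is comparable to the Poisson
kernel of the half-space at height `1`. -/
def poissonWeight (t : Ed d) : ℝ := ((1 + ‖t‖) ^ (d + 1))⁻¹

lemma poissonWeight_pos (t : Ed d) : 0 < poissonWeight t := by unfold poissonWeight; positivity

lemma continuous_poissonWeight : Continuous (poissonWeight (d := d)) :=
  Continuous.inv₀ (by fun_prop) fun _ ↦ by positivity

lemma integrable_poissonWeight : Integrable (poissonWeight (d := d)) := by
  refine (integrable_one_add_norm (E := Ed d) (μ := volume) (r := d + 1) (by simp)).congr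
    (.of_forall fun x ↦ ?_)
  simp only [poissonWeight]
  rw [Real.rpow_neg (by positivity)]
  norm_cast

lemma exists_norm_dil_le_poissonWeight (Θ : 𝓢(Ed d, ℂ)) :
    ∃ C, 0 < C ∧ ∀ (K ε : ℝ) (x y : Ed d), 0 < ε → 1 + ‖y‖ ≤ K * (ε + ‖x‖) →
      ‖dil d Θ ε x‖ ≤ C * K ^ (d + 1) * ε * poissonWeight y := by
  obtain ⟨C, hC, hΘ⟩ := exists_norm_dil_le Θ 1
  refine ⟨C, hC, fun K ε x y hε hy ↦ (hΘ ε x hε).trans ?_⟩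
  rw [pow_one, poissonWeight, ← div_eq_mul_inv, div_le_div_iff₀ (by positivity) (by positivity)]
  calc C * ε * (1 + ‖y‖) ^ (d + 1) ≤ C * ε * (K * (ε + ‖x‖)) ^ (d + 1) := by gcongr
    _ = C * K ^ (d + 1) * ε * (ε + ‖x‖) ^ (d + 1) := by rw [mul_pow]; ring

/-- The class of measurable functions on `ℝ^d` for which the convolutions `Φ_ε * f` converge
absolutely. -/
structure Admissible (f : Ed d → ℂ) : Prop where
  measurable : Measurable f
  integrable_sq : Integrable fun t ↦ ‖f t‖ ^ 2 / (1 + ‖t‖) ^ (d + 1)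

variable {f : Ed d → ℂ}

lemma Admissible.integrable_norm_mul_poissonWeight (hf : Admissible f) :
    Integrable fun t ↦ ‖f t‖ * poissonWeight t := by
  refine (hf.integrable_sq.add integrable_poissonWeight).mono'
    (hf.measurable.norm.mul continuous_poissonWeight.measurable).aestronglyMeasurable
    (.of_forall fun t ↦ ?_)
  have := poissonWeight_pos t
  rw [Real.norm_of_nonneg (by positivity)]
  change _ ≤ ‖f t‖ ^ 2 * poissonWeight t + poissonWeight t
  nlinarith [sq_nonneg (‖f t‖ - 1 / 2)]

lemma Admissible.memLp_indicator_ball (hf : Admissible f) {R : ℝ} (hR : 0 ≤ R) :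
    MemLp ((ball 0 R).indicator f) 2 := by
  have hm := hf.measurable.indicator (measurableSet_ball (x := (0 : Ed d)) (ε := R))
  rw [memLp_two_iff_integrable_sq_norm hm.aestronglyMeasurable]
  refine (hf.integrable_sq.const_mul ((1 + R) ^ (d + 1))).mono'
    (hm.norm.pow_const 2).aestronglyMeasurable (.of_forall fun t ↦ ?_)
  rw [Real.norm_of_nonneg (by positivity)]
  by_cases ht : t ∈ ball (0 : Ed d) R
  · rw [indicator_of_mem ht, ← mul_div_assoc, le_div_iff₀ (by positivity), mul_comm]
    gcongr
    exact (mem_ball_zero_iff.1 ht).le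
  · rw [indicator_of_notMem ht, norm_zero, zero_pow two_ne_zero]
    positivity

end Admissible

section SquareIntegrable

variable {α E : Type*} [MeasurableSpace α] [NormedAddCommGroup E] {k : α → E} {μ : Measure α}

lemma eLpNorm_two_pow_two (k : α → E) (μ : Measure α) :
    eLpNorm k 2 μ ^ 2 = ∫⁻ x, ‖k x‖ₑ ^ 2 ∂μ := by
  simpa using eLpNorm_nnreal_pow_eq_lintegral (f := k) (μ := μ) (p := 2) (by norm_num)

lemma lintegral_enorm_sq_lt_top (hk : MemLp k 2 μ) : ∫⁻ x, ‖k x‖ₑ ^ 2 ∂μ < ∞ := by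
  rw [← eLpNorm_two_pow_two]
  exact ENNReal.pow_lt_top hk.2

lemma lintegral_enorm_sq_eq_ofReal (hk : MemLp k 2 μ) :
    ∫⁻ x, ‖k x‖ₑ ^ 2 ∂μ = ENNReal.ofReal (∫ x, ‖k x‖ ^ 2 ∂μ) := by
  rw [ofReal_integral_eq_lintegral_ofReal ((memLp_two_iff_integrable_sq_norm hk.1).1 hk)
    (.of_forall fun x ↦ sq_nonneg ‖k x‖)]
  simp only [ENNReal.ofReal_pow (norm_nonneg _), ofReal_norm]

lemma memLp_two_of_lintegral_enorm_sq_lt_top (hk : AEStronglyMeasurable k μ)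
    (hfin : ∫⁻ x, ‖k x‖ₑ ^ 2 ∂μ < ∞) : MemLp k 2 μ :=
  ⟨hk, (ENNReal.pow_lt_top_iff.1 (by rwa [eLpNorm_two_pow_two])).resolve_right two_ne_zero⟩

lemma integrable_of_memLp_two {A : Set α} (hk : MemLp k 2 μ) (hA : Function.support k ⊆ A)
    (hμA : μ A ≠ ∞) : Integrable k μ :=
  memLp_one_iff_integrable.1 (hk.mono_exponent_of_measure_support_ne_top
    (fun _ hx ↦ Function.notMem_support.1 fun h ↦ hx (hA h)) hμA one_le_two)

end SquareIntegrable

section Fourier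

variable {V : Type*} [NormedAddCommGroup V] [InnerProductSpace ℝ V] [FiniteDimensional ℝ V]
  [MeasurableSpace V] [BorelSpace V] {h : V → ℂ}

lemma continuous_fourier (hh : Integrable h) : Continuous (𝓕 h) :=
  VectorFourier.fourierIntegral_continuous Real.continuous_fourierChar
    (by exact continuous_inner) hh

lemma fourier_toLp_ae_eq_fourier (h1 : Integrable h) (h2 : MemLp h 2) :
    (𝓕 (h2.toLp h) : Lp ℂ 2 (volume : Measure V)) =ᵐ[volume] 𝓕 h := by
  refine ae_eq_of_integral_contDiff_smul_eq
    ((Lp.memLp _).locallyIntegrable (by norm_num)) (continuous_fourier h1).locallyIntegrable ?_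
  intro g hg hgs
  set G : 𝓢(V, ℂ) := (hgs.comp_left (g := Complex.ofReal) rfl).toSchwartzMap
    (Complex.ofRealCLM.contDiff.comp hg)
  have hGg : ∀ x, G x = (g x : ℂ) := fun _ ↦ rfl
  have transpose_Lp := congrArg (fun T ↦ T G) (Lp.fourier_toTemperedDistribution_eq (h2.toLp h))
  simp only [Lp.toTemperedDistribution_apply, TemperedDistribution.fourier_apply] at transpose_Lp
  have transpose_L1 := VectorFourier.integral_fourierIntegral_smul_eq_flip
    (L := innerₗ V) (f := fun x ↦ G x) (g := h) (μ := volume) (ν := volume)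
    Real.continuous_fourierChar (by exact continuous_inner) G.integrable h1
  rw [flip_innerₗ] at transpose_L1
  calc ∫ x, g x • (𝓕 (h2.toLp h) : Lp ℂ 2 (volume : Measure V)) x
      = ∫ x, G x • (𝓕 (h2.toLp h) : Lp ℂ 2 (volume : Measure V)) x := by simp [hGg]
    _ = ∫ x, (𝓕 G) x • (h2.toLp h) x := transpose_Lp.symm
    _ = ∫ x, (𝓕 (fun x ↦ G x)) x • h x := by
      refine integral_congr_ae ?_
      filter_upwards [h2.coeFn_toLp] with x hx
      rw [hx]; rfl
    _ = ∫ x, G x • 𝓕 h x := transpose_L1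
    _ = ∫ x, g x • 𝓕 h x := by simp [hGg]

lemma lintegral_enorm_fourier_sq (h1 : Integrable h) (h2 : MemLp h 2) :
    ∫⁻ ξ, ‖𝓕 h ξ‖ₑ ^ 2 = ∫⁻ x, ‖h x‖ₑ ^ 2 := by
  have norm_eq := congrArg ENNReal.ofReal (Lp.norm_fourier_eq (h2.toLp h))
  rw [ofReal_norm, ofReal_norm, Lp.enorm_def, Lp.enorm_def,
    eLpNorm_congr_ae (fourier_toLp_ae_eq_fourier h1 h2), eLpNorm_congr_ae h2.coeFn_toLp] at norm_eq
  rw [← eLpNorm_two_pow_two, ← eLpNorm_two_pow_two, norm_eq]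

variable {d : ℕ}

lemma fourier_dil (Θ : Ed d → ℂ) {ε : ℝ} (hε : 0 < ε) (ξ : Ed d) :
    𝓕 (dil d Θ ε) ξ = 𝓕 Θ (ε • ξ) := by
  have hε' : (ε : ℂ) ≠ 0 := by exact_mod_cast hε.ne'
  have := Measure.integral_comp_smul (μ := (volume : Measure (Ed d)))
    (fun v ↦ Real.fourierChar (-inner ℝ v (ε • ξ)) • Θ v) ε⁻¹
  simp_rw [real_inner_smul_left, real_inner_smul_right, inv_mul_cancel_left₀ hε.ne'] at this
  rw [finrank_euclideanSpace_fin, abs_of_pos (by positivity), inv_pow, inv_inv] at this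
  simp_rw [Real.fourier_eq, real_inner_smul_right, dil, Circle.smul_def, smul_eq_mul,
    mul_left_comm _ ((ε : ℂ) ^ d)⁻¹, integral_const_mul]
  simp only [Circle.smul_def, smul_eq_mul] at this
  rw [this, Complex.real_smul]
  push_cast
  field_simp

lemma cnv_eq_convolution (g f : Ed d → ℂ) :
    cnv d g f = convolution g f (ContinuousLinearMap.mul ℂ ℂ) volume := by
  ext s
  rw [← convolution_flip]
  simp only [cnv, convolution_def, ContinuousLinearMap.flip_apply, ContinuousLinearMap.mul_apply']

lemma integrable_cnv {g h : Ed d → ℂ} (hg : Integrable g) (hh : Integrable h) :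
    Integrable (cnv d g h) := by
  rw [cnv_eq_convolution]
  exact hg.integrable_convolution _ hh

lemma norm_cnv_le {g h : Ed d → ℂ} {C : ℝ} {s : Ed d} (hg : ∀ t, h t ≠ 0 → ‖g (s - t)‖ ≤ C)
    (hh : Integrable h) : ‖cnv d g h s‖ ≤ C * ∫ t, ‖h t‖ := by
  rw [← integral_const_mul]
  refine norm_integral_le_of_norm_le (hh.norm.const_mul C) (.of_forall fun t ↦ ?_)
  rw [norm_mul]
  rcases eq_or_ne (h t) 0 with ht | ht
  · simp [ht]
  · gcongr; exact hg t ht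

lemma memLp_two_cnv {g h : Ed d → ℂ} {C : ℝ} (hg : Integrable g) (hgC : ∀ x, ‖g x‖ ≤ C)
    (hh : Integrable h) : MemLp (cnv d g h) 2 := by
  have hi := integrable_cnv hg hh
  rw [memLp_two_iff_integrable_sq_norm hi.1]
  refine (hi.norm.const_mul (C * ∫ t, ‖h t‖)).mono' (hi.1.norm.pow 2) (.of_forall fun s ↦ ?_)
  rw [Real.norm_of_nonneg (by positivity), pow_two]
  gcongr
  exact norm_cnv_le (fun _ _ ↦ hgC _) hh

lemma lintegral_enorm_cnv_sub_sq {g h : Ed d → ℂ} {C : ℝ} (hg : Integrable g)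
    (hgC : ∀ x, ‖g x‖ ≤ C) (h1 : Integrable h) (h2 : MemLp h 2) (c : ℂ) :
    ∫⁻ s, ‖cnv d g h s - c * h s‖ₑ ^ 2 = ∫⁻ ξ, ‖𝓕 g ξ - c‖ₑ ^ 2 * ‖𝓕 h ξ‖ₑ ^ 2 := by
  have hi := integrable_cnv hg h1
  rw [← lintegral_enorm_fourier_sq (h := fun s ↦ cnv d g h s - c * h s) (hi.sub (h1.const_mul c))
    ((memLp_two_cnv hg hgC h1).sub (h2.const_mul c))]
  refine lintegral_congr fun ξ ↦ ?_
  rw [← mul_pow, ← enorm_mul]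
  have fourier_sub : 𝓕 (fun s ↦ cnv d g h s - c * h s) ξ = 𝓕 (cnv d g h) ξ - c * 𝓕 h ξ := by
    simp only [Real.fourier_eq, smul_sub]
    rw [integral_sub ((Real.fourierIntegral_convergent_iff ξ).2 hi)
      ((Real.fourierIntegral_convergent_iff ξ).2 (h1.const_mul c)), ← integral_const_mul]
    simp only [Circle.smul_def, smul_eq_mul, mul_left_comm]
  rw [fourier_sub, cnv_eq_convolution, Real.fourier_mul_convolution_eq hg h1, sub_mul]

lemma lintegral_enorm_cnv_dil_sub_sq (Θ : 𝓢(Ed d, ℂ)) {ε : ℝ} (hε : 0 < ε) {h : Ed d → ℂ}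
    (h1 : Integrable h) (h2 : MemLp h 2) (c : ℂ) :
    ∫⁻ s, ‖cnv d (dil d Θ ε) h s - c * h s‖ₑ ^ 2
      = ∫⁻ ξ, ‖𝓕 Θ (ε • ξ) - c‖ₑ ^ 2 * ‖𝓕 h ξ‖ₑ ^ 2 := by
  obtain ⟨C, -, hC⟩ := exists_norm_dil_le_const Θ hε
  rw [lintegral_enorm_cnv_sub_sq (integrable_dil Θ.integrable hε) hC h1 h2]
  simp_rw [fourier_dil _ hε, ← SchwartzMap.fourier_coe]

lemma tendsto_lintegral_enorm_smul_sub_sq_mul {T : Ed d → ℂ} (hT : Continuous T) {C : ℝ}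
    (hTC : ∀ ξ, ‖T ξ‖ ≤ C) {g : Ed d → ℝ≥0∞} (hg : Measurable g) (hg' : ∀ ξ, g ξ ≠ ∞)
    (hint : ∫⁻ ξ, g ξ ≠ ∞) :
    Tendsto (fun δ : ℝ ↦ ∫⁻ ξ, ‖T (δ • ξ) - T 0‖ₑ ^ 2 * g ξ) (𝓝 0) (𝓝 0) := by
  have mT (δ : ℝ) : Measurable fun ξ ↦ ‖T (δ • ξ) - T 0‖ₑ ^ 2 :=
    ((hT.comp (continuous_const_smul δ)).sub continuous_const).measurable.enorm.pow_const 2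
  have hlim : ∀ ξ, Tendsto (fun δ : ℝ ↦ ‖T (δ • ξ) - T 0‖ₑ ^ 2 * g ξ) (𝓝 0) (𝓝 0) := by
    intro ξ
    have hcont : Continuous fun δ : ℝ ↦ ‖T (δ • ξ) - T 0‖ₑ ^ 2 * g ξ :=
      (ENNReal.continuous_mul_const (hg' ξ)).comp ((ENNReal.continuous_pow 2).comp
        ((hT.comp (continuous_id.smul continuous_const)).sub continuous_const).enorm)
    simpa using hcont.tendsto 0
  rw [← lintegral_zero (μ := (volume : Measure (Ed d)))]
  refine tendsto_lintegral_filter_of_dominated_convergence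
    (fun ξ ↦ ENNReal.ofReal (C + C) ^ 2 * g ξ)
    (.of_forall fun δ ↦ (mT δ).mul hg) (.of_forall fun δ ↦ .of_forall fun ξ ↦ ?_) ?_
    (.of_forall hlim)
  · rw [← ofReal_norm]
    gcongr
    exact (norm_sub_le _ _).trans (add_le_add (hTC _) (hTC _))
  · rw [lintegral_const_mul _ hg]
    exact ENNReal.mul_ne_top (by simp) hint

lemma tendsto_lintegral_enorm_cnv_dil_sub_sq (Θ : 𝓢(Ed d, ℂ)) (hΘ : ∫ x, Θ x = 1) {h : Ed d → ℂ}
    (h1 : Integrable h) (h2 : MemLp h 2) :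
    Tendsto (fun δ ↦ ∫⁻ s, ‖cnv d (dil d Θ δ) h s - h s‖ₑ ^ 2) (𝓝[>] 0) (𝓝 0) := by
  obtain ⟨C, -, hΘC⟩ := exists_norm_schwartz_le (𝓕 Θ)
  have hΘ0 : 𝓕 Θ 0 = 1 := by simpa [SchwartzMap.fourier_coe, Real.fourier_eq] using hΘ
  refine ((tendsto_lintegral_enorm_smul_sub_sq_mul (𝓕 Θ).continuous hΘC
    ((continuous_fourier h1).measurable.enorm.pow_const 2) (fun _ ↦ by simp) ?_).mono_left
    nhdsWithin_le_nhds).congr' ?_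
  · rw [lintegral_enorm_fourier_sq h1 h2]
    exact (lintegral_enorm_sq_lt_top h2).ne
  · filter_upwards [self_mem_nhdsWithin] with δ hδ
    simpa only [one_mul, hΘ0] using (lintegral_enorm_cnv_dil_sub_sq Θ hδ h1 h2 1).symm

end Fourier

section HalfSpace

/-- The measure `dε/ε` on the scales `ε > 0`. -/
def scaleMeasure : Measure ℝ :=
  (volume.restrict (Ioi 0)).withDensity fun ε ↦ ENNReal.ofReal ε⁻¹

/-- The measure `(dε/ε) ds` on the upper half-space of pairs `(ε, s)`. -/
def halfSpaceMeasure (d : ℕ) : Measure (ℝ × Ed d) := scaleMeasure.prod volume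

instance : SFinite scaleMeasure := by unfold scaleMeasure; infer_instance

instance (d : ℕ) : SFinite (halfSpaceMeasure d) := by unfold halfSpaceMeasure; infer_instance

lemma lintegral_scaleMeasure (F : ℝ → ℝ≥0∞) :
    ∫⁻ ε, F ε ∂scaleMeasure = ∫⁻ ε in Ioi 0, ENNReal.ofReal ε⁻¹ * F ε :=
  lintegral_withDensity_eq_lintegral_mul_non_measurable _
    (ENNReal.measurable_ofReal.comp measurable_inv) (by simp) F

lemma ae_scaleMeasure_pos : ∀ᵐ ε ∂scaleMeasure, 0 < ε :=
  withDensity_absolutelyContinuous _ _ (ae_restrict_mem measurableSet_Ioi)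

lemma ae_halfSpaceMeasure_pos (d : ℕ) : ∀ᵐ p ∂halfSpaceMeasure d, 0 < p.1 :=
  Measure.quasiMeasurePreserving_fst.ae ae_scaleMeasure_pos

lemma lintegral_halfSpaceMeasure {d : ℕ} {F : ℝ × Ed d → ℝ≥0∞} (hF : Measurable F) :
    ∫⁻ p, F p ∂halfSpaceMeasure d = ∫⁻ ε, (∫⁻ s, F (ε, s)) ∂scaleMeasure :=
  lintegral_prod _ hF.aemeasurable

end HalfSpace

section SquareFunction

lemma inv_mul_div_one_add_sq_le (a : ℝ) {ε : ℝ} (hε : 0 < ε) :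
    ε⁻¹ * (ε * a / (1 + (ε * a) ^ 2)) ^ 2 ≤ |a| / 2 * (1 + (a * ε) ^ 2)⁻¹ := by
  have amgm : 2 * (ε * |a|) ≤ 1 + (ε * a) ^ 2 := by
    have := two_mul_le_add_sq 1 (ε * |a|)
    rwa [mul_one, one_pow, mul_pow, sq_abs, ← mul_pow] at this
  calc ε⁻¹ * (ε * a / (1 + (ε * a) ^ 2)) ^ 2
      = |a| / 2 * (2 * (ε * |a|)) / (1 + (ε * a) ^ 2) ^ 2 := by
        rw [div_pow, mul_pow, ← sq_abs a]; field_simp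
    _ ≤ |a| / 2 * (1 + (ε * a) ^ 2) / (1 + (ε * a) ^ 2) ^ 2 := by gcongr
    _ = |a| / 2 * (1 + (a * ε) ^ 2)⁻¹ := by rw [mul_comm a]; field_simp

lemma lintegral_scaleMeasure_div_one_add_sq_le (a : ℝ) :
    ∫⁻ ε, ENNReal.ofReal ((ε * a / (1 + (ε * a) ^ 2)) ^ 2) ∂scaleMeasure
      ≤ ENNReal.ofReal (π / 2) := by
  rcases eq_or_ne a 0 with rfl | ha
  · simp
  have hint : ∫ ε : ℝ, |a| / 2 * (1 + (a * ε) ^ 2)⁻¹ = π / 2 := by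
    rw [integral_const_mul, Measure.integral_comp_mul_left fun x : ℝ ↦ (1 + x ^ 2)⁻¹,
      integral_univ_inv_one_add_sq, smul_eq_mul, abs_inv]
    field_simp
  rw [lintegral_scaleMeasure, ← hint, ofReal_integral_eq_lintegral_ofReal
    ((integrable_inv_one_add_sq.comp_mul_left' ha).const_mul _) (.of_forall fun _ ↦ by positivity)]
  refine (setLIntegral_mono' measurableSet_Ioi fun ε (hε : 0 < ε) ↦ ?_).trans
    (setLIntegral_le_lintegral _ _)
  rw [← ENNReal.ofReal_mul (by positivity)]
  exact ENNReal.ofReal_le_ofReal (inv_mul_div_one_add_sq_le a hε)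

variable {V : Type*} [NormedAddCommGroup V] [NormedSpace ℝ V] {d : ℕ}

lemma exists_norm_le_div_one_add_sq (T : 𝓢(V, ℂ)) (hT : T 0 = 0) :
    ∃ C, 0 < C ∧ ∀ η, ‖T η‖ ≤ C * (‖η‖ / (1 + ‖η‖ ^ 2)) := by
  obtain ⟨C, hC, hΘ⟩ := exists_norm_iteratedFDeriv_mul_one_add_pow_le T 1 0
  obtain ⟨D, hD, hdecay⟩ := T.decay 1 0
  simp only [norm_iteratedFDeriv_one, norm_iteratedFDeriv_zero, pow_zero, mul_one, pow_one]
    at hΘ hdecay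
  refine ⟨C + D, by positivity, fun η ↦ ?_⟩
  have lipschitz : ‖T η‖ ≤ C * ‖η‖ := by
    simpa [hT] using convex_univ.norm_image_sub_le_of_norm_fderiv_le (𝕜 := ℝ)
      (fun x _ ↦ T.differentiable.differentiableAt) (fun x _ ↦ hΘ x) (mem_univ 0) (mem_univ η)
  rw [← mul_div_assoc, le_div_iff₀ (by positivity)]
  nlinarith [mul_le_mul_of_nonneg_left (hdecay η) (norm_nonneg η)]

lemma exists_lintegral_scaleMeasure_enorm_sq_le (T : 𝓢(V, ℂ)) (hT : T 0 = 0) :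
    ∃ C : ℝ≥0, ∀ ξ, ∫⁻ ε, ‖T (ε • ξ)‖ₑ ^ 2 ∂scaleMeasure ≤ C := by
  obtain ⟨C, hC, hTC⟩ := exists_norm_le_div_one_add_sq T hT
  refine ⟨(C ^ 2 * (π / 2)).toNNReal, fun ξ ↦ ?_⟩
  calc ∫⁻ ε, ‖T (ε • ξ)‖ₑ ^ 2 ∂scaleMeasure
      ≤ ∫⁻ ε, ENNReal.ofReal (C ^ 2)
          * ENNReal.ofReal ((ε * ‖ξ‖ / (1 + (ε * ‖ξ‖) ^ 2)) ^ 2) ∂scaleMeasure := by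
        refine lintegral_mono_ae (ae_scaleMeasure_pos.mono fun ε hε ↦ ?_)
        rw [← ENNReal.ofReal_mul (by positivity), ← mul_pow, ← ofReal_norm,
          ← ENNReal.ofReal_pow (norm_nonneg _)]
        have := hTC (ε • ξ)
        rw [norm_smul, Real.norm_of_nonneg hε.le] at this
        gcongr
    _ ≤ ENNReal.ofReal (C ^ 2) * ENNReal.ofReal (π / 2) := by
        rw [lintegral_const_mul' _ _ ENNReal.ofReal_ne_top]
        gcongr
        exact lintegral_scaleMeasure_div_one_add_sq_le _
    _ = ENNReal.ofReal (C ^ 2 * (π / 2)) := (ENNReal.ofReal_mul (by positivity)).symm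

theorem exists_lintegral_enorm_cnv_dil_sq_le (Θ : 𝓢(Ed d, ℂ)) (hΘ : ∫ x, Θ x = 0) :
    ∃ C : ℝ≥0, ∀ h : Ed d → ℂ, Measurable h → Integrable h → MemLp h 2 →
      ∫⁻ p, ‖cnv d (dil d Θ p.1) h p.2‖ₑ ^ 2 ∂halfSpaceMeasure d ≤ C * ∫⁻ x, ‖h x‖ₑ ^ 2 := by
  have hΘ0 : 𝓕 Θ 0 = 0 := by simpa [SchwartzMap.fourier_coe, Real.fourier_eq] using hΘ
  obtain ⟨C, hC⟩ := exists_lintegral_scaleMeasure_enorm_sq_le (𝓕 Θ) hΘ0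
  refine ⟨C, fun h hm h1 h2 ↦ ?_⟩
  have mT : Measurable fun q : ℝ × Ed d ↦ ‖𝓕 Θ (q.1 • q.2)‖ₑ ^ 2 :=
    ((𝓕 Θ).continuous.measurable.comp (measurable_fst.smul measurable_snd)).enorm.pow_const 2
  have mh : Measurable fun ξ ↦ ‖𝓕 h ξ‖ₑ ^ 2 :=
    (continuous_fourier h1).measurable.enorm.pow_const 2
  calc ∫⁻ p, ‖cnv d (dil d Θ p.1) h p.2‖ₑ ^ 2 ∂halfSpaceMeasure d
      = ∫⁻ ε, (∫⁻ ξ, ‖𝓕 Θ (ε • ξ)‖ₑ ^ 2 * ‖𝓕 h ξ‖ₑ ^ 2) ∂scaleMeasure := by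
        rw [lintegral_halfSpaceMeasure
          ((measurable_cnv_dil Θ.continuous.measurable hm).enorm.pow_const 2)]
        refine lintegral_congr_ae (ae_scaleMeasure_pos.mono fun ε hε ↦ ?_)
        simpa only [zero_mul, sub_zero] using lintegral_enorm_cnv_dil_sub_sq Θ hε h1 h2 0
    _ = ∫⁻ ξ, (∫⁻ ε, ‖𝓕 Θ (ε • ξ)‖ₑ ^ 2 ∂scaleMeasure) * ‖𝓕 h ξ‖ₑ ^ 2 := by
        rw [lintegral_lintegral_swap (mT.mul (mh.comp measurable_snd)).aemeasurable]
        refine lintegral_congr fun ξ ↦ lintegral_mul_const' _ _ (by simp)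
    _ ≤ ∫⁻ ξ, C * ‖𝓕 h ξ‖ₑ ^ 2 := by
        gcongr with ξ
        exact hC ξ
    _ = C * ∫⁻ x, ‖h x‖ₑ ^ 2 := by
        rw [lintegral_const_mul _ mh, lintegral_enorm_fourier_sq h1 h2]

end SquareFunction

section RadialSymbols

open scoped ContDiff

variable {V : Type*} [NormedAddCommGroup V] [InnerProductSpace ℝ V]

/-- The function with angular part `θ` and radial part `m`, in polar coordinates of `V`. -/
def polarMul (θ : V → ℝ) (m : ℝ → ℝ) (ξ : V) : ℝ := θ (‖ξ‖⁻¹ • ξ) * m ‖ξ‖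

/-- A smooth step rising from `0` at `a` to `1` at `b`. -/
def smoothStep (a b u : ℝ) : ℝ := Real.smoothTransition ((u - a) / (b - a))

variable {θ : V → ℝ} {m : ℝ → ℝ} {a b u : ℝ}

lemma contDiff_smoothStep (a b : ℝ) : ContDiff ℝ ∞ (smoothStep a b) :=
  Real.smoothTransition.contDiff.comp (by fun_prop)

lemma smoothStep_of_le (hab : a < b) (hu : u ≤ a) : smoothStep a b u = 0 :=
  Real.smoothTransition.zero_of_nonpos
    (div_nonpos_of_nonpos_of_nonneg (sub_nonpos.2 hu) (sub_nonneg.2 hab.le))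

lemma smoothStep_of_ge (hab : a < b) (hu : b ≤ u) : smoothStep a b u = 1 :=
  Real.smoothTransition.one_of_one_le (by rw [le_div_iff₀ (sub_pos.2 hab)]; linarith)

lemma deriv_smoothStep_of_notMem (hab : a < b) (hu : u ∉ Icc a b) :
    deriv (smoothStep a b) u = 0 := by
  rw [mem_Icc, not_and_or, not_le, not_le] at hu
  rcases hu with hu | hu
  · have : smoothStep a b =ᶠ[𝓝 u] fun _ ↦ 0 := by
      filter_upwards [gt_mem_nhds hu] with v hv using smoothStep_of_le hab hv.le
    rw [this.deriv_eq, deriv_const]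
  · have : smoothStep a b =ᶠ[𝓝 u] fun _ ↦ 1 := by
      filter_upwards [lt_mem_nhds hu] with v hv using smoothStep_of_ge hab hv.le
    rw [this.deriv_eq, deriv_const]

lemma polarMul_smul (θ : V → ℝ) (m : ℝ → ℝ) {ε : ℝ} (hε : 0 < ε) (ξ : V) :
    polarMul θ m (ε • ξ) = θ (‖ξ‖⁻¹ • ξ) * m (ε * ‖ξ‖) := by
  unfold polarMul
  rw [norm_smul, Real.norm_of_nonneg hε.le, smul_smul]
  congr 3
  field_simp

lemma contDiff_polarMul (ha : 0 < a) (hθ : ContDiff ℝ ∞ θ) (hm : ContDiff ℝ ∞ m)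
    (hm0 : ∀ u ≤ a, m u = 0) : ContDiff ℝ ∞ (polarMul θ m) := by
  refine contDiff_iff_contDiffAt.2 fun ξ ↦ ?_
  rcases eq_or_ne ξ 0 with rfl | hξ
  · have : polarMul θ m =ᶠ[𝓝 0] fun _ ↦ 0 := by
      filter_upwards [ball_mem_nhds (0 : V) ha] with η hη
      simp [polarMul, hm0 _ (mem_ball_zero_iff.1 hη).le]
    exact contDiffAt_const.congr_of_eventuallyEq this
  · have hn : ContDiffAt ℝ ∞ (fun η : V ↦ ‖η‖) ξ := contDiffAt_norm ℝ hξ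
    exact (hθ.contDiffAt.comp ξ ((hn.inv (norm_ne_zero_iff.2 hξ)).smul contDiffAt_id)).mul
      (hm.contDiffAt.comp ξ hn)

lemma hasDerivAt_comp_smul {F : Type*} [NormedAddCommGroup F] [NormedSpace ℝ F] {P : V → F}
    (hP : Differentiable ℝ P) {ε : ℝ} (hε : ε ≠ 0) (ξ : V) :
    HasDerivAt (fun ε : ℝ ↦ P (ε • ξ)) (ε⁻¹ • fderiv ℝ P (ε • ξ) (ε • ξ)) ε := by
  have h := (hP (ε • ξ)).hasFDerivAt.comp_hasDerivAt ε ((hasDerivAt_id ε).smul_const ξ)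
  rw [map_smul, inv_smul_smul₀ hε]
  simpa only [one_smul, Function.comp_def, id_eq] using h

lemma fderiv_polarMul_apply_self (hm : Differentiable ℝ m)
    (hp : Differentiable ℝ (polarMul θ m)) (ξ : V) :
    fderiv ℝ (polarMul θ m) ξ ξ = polarMul θ (fun u ↦ u * deriv m u) ξ := by
  have chain_rule : HasDerivAt (fun ε : ℝ ↦ polarMul θ m (ε • ξ))
      (fderiv ℝ (polarMul θ m) ξ ξ) 1 := by
    simpa using hasDerivAt_comp_smul hp one_ne_zero ξ
  have along_ray : HasDerivAt (fun ε : ℝ ↦ θ (‖ξ‖⁻¹ • ξ) * m (ε * ‖ξ‖))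
      (θ (‖ξ‖⁻¹ • ξ) * (deriv m (1 * ‖ξ‖) * (1 * ‖ξ‖))) 1 :=
    ((hm (1 * ‖ξ‖)).hasDerivAt.comp 1 ((hasDerivAt_id 1).mul_const ‖ξ‖)).const_mul _
  have heq : (fun ε : ℝ ↦ polarMul θ m (ε • ξ)) =ᶠ[𝓝 1] fun ε ↦ θ (‖ξ‖⁻¹ • ξ) * m (ε * ‖ξ‖) := by
    filter_upwards [lt_mem_nhds one_pos] with ε hε using polarMul_smul θ m hε ξ
  rw [chain_rule.unique (along_ray.congr_of_eventuallyEq heq), polarMul, one_mul, mul_comm ‖ξ‖]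

lemma polarMul_eventuallyEq_zero (ha : 0 < a) (hm : ∀ u ∉ Icc a b, m u = 0) {φ : V → ℂ}
    (hφ : ∀ η ∈ tsupport θ, ∀ ε ∈ Icc a b, φ (ε • η) ≠ 0) {ξ : V} (hξ : φ ξ = 0) :
    polarMul θ m =ᶠ[𝓝 ξ] fun _ ↦ 0 := by
  by_cases hab : ‖ξ‖ ∈ Icc a b
  · have hpos : 0 < ‖ξ‖ := ha.trans_le hab.1
    have hdir : ‖ξ‖⁻¹ • ξ ∉ tsupport θ := fun hmem ↦ hφ _ hmem _ hab (by
      rw [smul_smul, mul_inv_cancel₀ hpos.ne', one_smul, hξ])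
    have hc : ContinuousAt (fun η : V ↦ ‖η‖⁻¹ • η) ξ :=
      (continuous_norm.continuousAt.inv₀ hpos.ne').smul continuousAt_id
    filter_upwards [hc.eventually ((isClosed_tsupport θ).isOpen_compl.mem_nhds hdir)] with η hη
    simp [polarMul, image_eq_zero_of_notMem_tsupport hη]
  · filter_upwards [continuous_norm.continuousAt.eventually
      (isClosed_Icc.isOpen_compl.mem_nhds hab)] with η hη
    simp [polarMul, hm _ hη]

lemma exists_open_scale_interval_ne_zero {φ : V → ℂ} (hφ : Continuous φ) {w : V} {ε : ℝ}
    (hε : 0 < ε) (hne : φ (ε • w) ≠ 0) :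
    ∃ (U : Set V) (a b : ℝ), IsOpen U ∧ w ∈ U ∧ 0 < a ∧ a < b ∧
      ∀ η ∈ U, ∀ ε ∈ Icc a b, φ (ε • η) ≠ 0 := by
  have hc : Continuous fun q : ℝ × V ↦ φ (q.1 • q.2) :=
    hφ.comp (continuous_fst.smul continuous_snd)
  obtain ⟨A, hA, W, hW, hAW⟩ := mem_nhds_prod_iff.1
    ((isOpen_ne.preimage hc).mem_nhds (x := (ε, w)) hne)
  obtain ⟨U, hUW, hU, hwU⟩ := _root_.mem_nhds_iff.1 hW
  obtain ⟨κ, hκ, hκA⟩ := Metric.mem_nhds_iff.1 hA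
  refine ⟨U, ε, ε + κ / 2, hU, hwU, hε, by linarith, fun η hη e he ↦
    hAW (mk_mem_prod (hκA ?_) (hUW hη))⟩
  rw [mem_ball, Real.dist_eq, abs_of_nonneg (by linarith [he.1])]
  linarith [he.2]

variable [FiniteDimensional ℝ V] {φ : V → ℂ}

lemma exists_angular_partition (hφ : Continuous φ)
    (hnd : ∀ ξ, ξ ≠ 0 → ∃ ε : ℝ, 0 < ε ∧ φ (ε • ξ) ≠ 0) :
    ∃ (t : Finset V) (θ : t → V → ℝ) (a b : t → ℝ), (∀ i, ContDiff ℝ ∞ (θ i)) ∧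
      (∀ i, 0 < a i) ∧ (∀ i, a i < b i) ∧
      (∀ i, ∀ η ∈ tsupport (θ i), ∀ ε ∈ Icc (a i) (b i), φ (ε • η) ≠ 0) ∧
      ∀ x ∈ sphere (0 : V) 1, ∑ i, θ i x = 1 := by
  have hloc : ∀ w ∈ sphere (0 : V) 1, ∃ (U : Set V) (a b : ℝ), IsOpen U ∧ w ∈ U ∧ 0 < a ∧ a < b ∧
      ∀ η ∈ U, ∀ ε ∈ Icc a b, φ (ε • η) ≠ 0 := by
    intro w hw
    obtain ⟨ε, hε, hne⟩ := hnd w (ne_zero_of_mem_unit_sphere ⟨w, hw⟩)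
    exact exists_open_scale_interval_ne_zero hφ hε hne
  choose! U a b hU hwU ha hab hne using hloc
  obtain ⟨t, hts, htc⟩ := (isCompact_sphere (0 : V) 1).elim_nhds_subcover U
    fun w hw ↦ (hU w hw).mem_nhds (hwU w hw)
  obtain ⟨θ, hθ⟩ := SmoothPartitionOfUnity.exists_isSubordinate (modelWithCornersSelf ℝ V)
    isClosed_sphere (fun i : t ↦ U i) (fun i ↦ hU i (hts i i.2))
    (by simpa only [iUnion_subtype] using htc)
  refine ⟨t, fun i ↦ θ i, fun i ↦ a i, fun i ↦ b i, fun i ↦ (θ i).contMDiff.contDiff,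
    fun i ↦ ha i (hts i i.2), fun i ↦ hab i (hts i i.2),
    fun i η hη ↦ hne i (hts i i.2) η (hθ i hη), fun x hx ↦ ?_⟩
  rw [← finsum_eq_sum_of_fintype]
  exact θ.sum_eq_one hx

/-- `P = 1 - ∑ᵢ θᵢ(ξ/|ξ|) mᵢ(|ξ|)`, where the ramp of `mᵢ` is placed at radii at which `φ` does
not vanish in the directions of `supp θᵢ`. -/
lemma exists_radial_cutoff (hφ : Continuous φ)
    (hnd : ∀ ξ, ξ ≠ 0 → ∃ ε : ℝ, 0 < ε ∧ φ (ε • ξ) ≠ 0) :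
    ∃ P : V → ℝ, ContDiff ℝ ∞ P ∧ HasCompactSupport P ∧ P 0 = 1 ∧
      ∀ ξ, φ ξ = 0 → (fun η ↦ fderiv ℝ P η η) =ᶠ[𝓝 ξ] fun _ ↦ 0 := by
  obtain ⟨t, θ, a, b, hθ, ha, hab, hne, hsum⟩ := exists_angular_partition hφ hnd
  set S : t → V → ℝ := fun i ↦ polarMul (θ i) (smoothStep (a i) (b i))
  have hSsmooth (i : t) : ContDiff ℝ ∞ (S i) :=
    contDiff_polarMul (ha i) (hθ i) (contDiff_smoothStep _ _) fun u hu ↦ smoothStep_of_le (hab i) hu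
  refine ⟨fun ξ ↦ 1 - ∑ i, S i ξ, contDiff_const.sub (ContDiff.sum fun i _ ↦ hSsmooth i), ?_, ?_,
    fun ξ hξ ↦ ?_⟩
  · obtain ⟨B, hB⟩ := (finite_range b).bddAbove
    refine HasCompactSupport.intro (isCompact_closedBall (0 : V) (max B 0)) fun ξ hξ ↦ ?_
    rw [mem_closedBall_zero_iff, not_le, max_lt_iff] at hξ
    have hstep (i : t) : smoothStep (a i) (b i) ‖ξ‖ = 1 :=
      smoothStep_of_ge (hab i) ((hB (mem_range_self i)).trans hξ.1.le)
    simp only [S, polarMul, hstep, mul_one]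
    rw [hsum _ (by simp [norm_smul, hξ.2.ne']), sub_self]
  · simp [S, polarMul, fun i ↦ smoothStep_of_le (hab i) (ha i).le]
  · have radial_deriv (i : t) (η : V) : fderiv ℝ (S i) η η
        = polarMul (θ i) (fun u ↦ u * deriv (smoothStep (a i) (b i)) u) η :=
      fderiv_polarMul_apply_self ((contDiff_smoothStep _ _).differentiable (by simp))
        ((hSsmooth i).differentiable (by simp)) η
    have hzero : ∀ᶠ η in 𝓝 ξ, ∀ i, fderiv ℝ (S i) η η = 0 := by
      refine eventually_all.2 fun i ↦ ?_
      simp only [radial_deriv]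
      exact polarMul_eventuallyEq_zero (ha i)
        (fun u hu ↦ by rw [deriv_smoothStep_of_notMem (hab i) hu, mul_zero]) (hne i) hξ
    filter_upwards [hzero] with η hη
    rw [fderiv_const_sub, fderiv_fun_sum fun i _ ↦ (hSsmooth i).differentiable (by simp) η]
    simp [hη]

theorem exists_calderon_symbols (hφ : ContDiff ℝ ∞ φ)
    (hnd : ∀ ξ, ξ ≠ 0 → ∃ ε : ℝ, 0 < ε ∧ φ (ε • ξ) ≠ 0) :
    ∃ g P : V → ℂ, ContDiff ℝ ∞ g ∧ HasCompactSupport g ∧ g 0 = 0 ∧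
      ContDiff ℝ ∞ P ∧ HasCompactSupport P ∧ P 0 = 1 ∧
      ∀ (ξ : V) (ε : ℝ), ε ≠ 0 →
        HasDerivAt (fun ε : ℝ ↦ P (ε • ξ)) (-(ε⁻¹ • (φ (ε • ξ) * g (ε • ξ)))) ε := by
  obtain ⟨P, hP, hPc, hP0, hPφ⟩ := exists_radial_cutoff hφ.continuous hnd
  set D : V → ℝ := fun ξ ↦ fderiv ℝ P ξ ξ
  have hDsmooth : ContDiff ℝ ∞ D :=
    (hP.fderiv_right le_rfl).clm_apply contDiff_id
  have hDc : HasCompactSupport D := by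
    refine (hPc.fderiv ℝ).mono fun ξ hξ h0 ↦ hξ ?_
    simp [D, h0]
  have hPℂ : ContDiff ℝ ∞ fun ξ ↦ (P ξ : ℂ) := Complex.ofRealCLM.contDiff.comp hP
  refine ⟨fun ξ ↦ -(D ξ : ℂ) / φ ξ, fun ξ ↦ P ξ, contDiff_iff_contDiffAt.2 fun ξ ↦ ?_,
    hDc.mono fun ξ hξ h0 ↦ hξ (by simp [h0]), by simp [D], hPℂ,
    hPc.comp_left Complex.ofReal_zero, by simp [hP0], fun ξ ε hε ↦ ?_⟩
  · have hDℂ : ContDiffAt ℝ ∞ (fun ξ ↦ (D ξ : ℂ)) ξ :=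
      (Complex.ofRealCLM.contDiff.comp hDsmooth).contDiffAt
    by_cases hξ : φ ξ = 0
    · refine (contDiffAt_const (c := (0 : ℂ))).congr_of_eventuallyEq ?_
      filter_upwards [hPφ ξ hξ] with η hη
      simp [show D η = 0 from hη]
    · simp only [div_eq_mul_inv]
      exact hDℂ.neg.mul (hφ.contDiffAt.inv hξ)
  · have cancel : φ (ε • ξ) * (-(D (ε • ξ) : ℂ) / φ (ε • ξ)) = -(D (ε • ξ) : ℂ) := by
      by_cases h0 : φ (ε • ξ) = 0
      · simp [h0, show D (ε • ξ) = 0 from (hPφ _ h0).eq_of_nhds]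
      · field_simp
    rw [cancel, smul_neg, neg_neg]
    refine (hasDerivAt_comp_smul (hP.differentiable (by simp)) hε ξ).ofReal_comp.congr_deriv ?_
    simp [D]

end RadialSymbols

section CalderonFormula

variable {δ R : ℝ}

lemma scaleMeasure_restrict_Ioc (hδ : 0 ≤ δ) (R : ℝ) : scaleMeasure.restrict (Ioc δ R)
    = (volume.restrict (Ioc δ R)).withDensity fun ε ↦ ENNReal.ofReal ε⁻¹ := by
  rw [scaleMeasure, restrict_withDensity measurableSet_Ioc, Measure.restrict_restrict_of_subset]
  exact fun ε hε ↦ hδ.trans_lt hε.1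

lemma scaleMeasure_Ioc_lt_top (hδ : 0 < δ) (R : ℝ) : scaleMeasure (Ioc δ R) < ∞ := by
  rw [← Measure.restrict_apply_self, scaleMeasure_restrict_Ioc hδ.le,
    withDensity_apply _ measurableSet_Ioc, Measure.restrict_restrict_of_subset subset_rfl]
  calc ∫⁻ ε in Ioc δ R, ENNReal.ofReal ε⁻¹
      ≤ ∫⁻ _ in Ioc δ R, ENNReal.ofReal δ⁻¹ :=
        setLIntegral_mono measurable_const fun ε hε ↦
          ENNReal.ofReal_le_ofReal (inv_anti₀ hδ hε.1.le)
    _ < ∞ := by simp [ENNReal.mul_lt_top]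

lemma setIntegral_scaleMeasure_Ioc {F : Type*} [NormedAddCommGroup F] [NormedSpace ℝ F]
    (hδ : 0 ≤ δ) (R : ℝ) (k : ℝ → F) :
    ∫ ε in Ioc δ R, k ε ∂scaleMeasure = ∫ ε in Ioc δ R, ε⁻¹ • k ε := by
  rw [scaleMeasure_restrict_Ioc hδ, integral_withDensity_eq_integral_toReal_smul
    (by fun_prop) (by simp)]
  refine setIntegral_congr_fun measurableSet_Ioc fun ε hε ↦ ?_
  simp only [ENNReal.toReal_ofReal (inv_nonneg.2 (hδ.trans hε.1.le))]

lemma exists_calderon_pair {V : Type*} [NormedAddCommGroup V] [InnerProductSpace ℝ V]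
    [FiniteDimensional ℝ V] [MeasurableSpace V] [BorelSpace V] (Φ : 𝓢(V, ℂ))
    (hΦ : ∀ ξ, ξ ≠ 0 → ∃ ε : ℝ, 0 < ε ∧ 𝓕 Φ (ε • ξ) ≠ 0) :
    ∃ Ψ p : 𝓢(V, ℂ), ∫ x, Ψ x = 0 ∧ ∫ x, p x = 1 ∧ ∀ ⦃δ R : ℝ⦄, 0 < δ → δ ≤ R → ∀ ξ,
      ∫ ε in Ioc δ R, 𝓕 Φ (ε • ξ) * 𝓕 Ψ (ε • ξ) ∂scaleMeasure = 𝓕 p (δ • ξ) - 𝓕 p (R • ξ) := by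
  obtain ⟨g, P, hg, hgc, hg0, hP, hPc, hP0, hderiv⟩ := exists_calderon_symbols (𝓕 Φ).smooth' hΦ
  have fourier_fourierInv (T : 𝓢(V, ℂ)) : 𝓕 (𝓕⁻ T : 𝓢(V, ℂ)) = T :=
    FourierTransform.fourier_fourierInv_eq T
  have integral_fourierInv (T : 𝓢(V, ℂ)) : ∫ x, (𝓕⁻ T : 𝓢(V, ℂ)) x = T 0 := by
    conv_rhs => rw [← fourier_fourierInv T, SchwartzMap.fourier_coe, Real.fourier_eq]
    simp
  refine ⟨𝓕⁻ (hgc.toSchwartzMap hg), 𝓕⁻ (hPc.toSchwartzMap hP), ?_, ?_, fun δ R hδ hR ξ ↦ ?_⟩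
  · rw [integral_fourierInv]; exact hg0
  · rw [integral_fourierInv]; exact hP0
  · rw [fourier_fourierInv, fourier_fourierInv, setIntegral_scaleMeasure_Ioc hδ.le,
      ← intervalIntegral.integral_of_le hR]
    have hne : ∀ ε ∈ uIcc δ R, ε ≠ 0 := fun ε hε ↦
      (hδ.trans_le (uIcc_of_le hR ▸ hε).1).ne'
    have hcont : ContinuousOn (fun ε : ℝ ↦ ε⁻¹ • (𝓕 Φ (ε • ξ) * g (ε • ξ))) (uIcc δ R) :=
      (continuousOn_inv₀.mono hne).smul (Continuous.continuousOn
        (((𝓕 Φ).continuous.comp (by fun_prop)).mul (hg.continuous.comp (by fun_prop))))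
    have ftc := intervalIntegral.integral_eq_sub_of_hasDerivAt
      (fun ε hε ↦ hderiv ξ ε (hne ε hε)) hcont.neg.intervalIntegrable
    rw [intervalIntegral.integral_neg, neg_eq_iff_eq_neg, neg_sub] at ftc
    exact ftc

variable {d : ℕ}

lemma dil_eq_integral_fourier (Θ : 𝓢(Ed d, ℂ)) {ε : ℝ} (hε : 0 < ε) (x : Ed d) :
    dil d Θ ε x = ∫ ξ, Real.fourierChar (inner ℝ ξ x) • 𝓕 Θ (ε • ξ) := by
  have hfourier : 𝓕 (dil d Θ ε) = fun ξ ↦ 𝓕 Θ (ε • ξ) :=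
    funext fun ξ ↦ (fourier_dil Θ hε ξ).trans (by rw [SchwartzMap.fourier_coe])
  have hi : Integrable (𝓕 (dil d Θ ε)) := by
    rw [hfourier]; exact (𝓕 Θ).integrable.comp_smul hε.ne'
  rw [← congrFun ((continuous_dil Θ.continuous ε).fourierInv_fourier_eq
    (integrable_dil Θ.integrable hε) hi) x, Real.fourierInv_eq, hfourier]

lemma integrable_fourierChar_smul_fourier_smul (Θ : 𝓢(Ed d, ℂ)) (hδ : 0 < δ) (R : ℝ) (x : Ed d) :
    Integrable (fun q : ℝ × Ed d ↦ Real.fourierChar (inner ℝ q.2 x) • 𝓕 Θ (q.1 • q.2))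
      ((scaleMeasure.restrict (Ioc δ R)).prod volume) := by
  obtain ⟨C, -, hC⟩ := exists_norm_smul_mul_one_add_pow_le (𝓕 Θ) (d + 1) hδ
  have : IsFiniteMeasure (scaleMeasure.restrict (Ioc δ R)) :=
    isFiniteMeasure_restrict.2 (scaleMeasure_Ioc_lt_top hδ R).ne
  have hcont : Continuous fun q : ℝ × Ed d ↦
      Real.fourierChar (inner ℝ q.2 x) • 𝓕 Θ (q.1 • q.2) :=
    (Real.continuous_fourierChar.comp (by fun_prop)).smul ((𝓕 Θ).continuous.comp (by fun_prop))
  refine (((integrable_poissonWeight (d := d)).const_mul C).comp_snd _).mono'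
    hcont.aestronglyMeasurable ?_
  filter_upwards [Measure.quasiMeasurePreserving_fst.ae (ae_restrict_mem measurableSet_Ioc)]
    with q hq
  rw [Circle.norm_smul, poissonWeight, ← div_eq_mul_inv, le_div_iff₀ (by positivity)]
  exact hC _ _ hq.1.le

lemma setIntegral_dil_scaleMeasure (hδ : 0 < δ) (hR : δ ≤ R) {Q p : 𝓢(Ed d, ℂ)}
    (hQ : ∀ ξ, ∫ ε in Ioc δ R, 𝓕 Q (ε • ξ) ∂scaleMeasure = 𝓕 p (δ • ξ) - 𝓕 p (R • ξ))
    (x : Ed d) :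
    ∫ ε in Ioc δ R, dil d Q ε x ∂scaleMeasure = dil d p δ x - dil d p R x := by
  have hint {ε : ℝ} (hε : 0 < ε) :
      Integrable fun ξ ↦ Real.fourierChar (inner ℝ ξ x) • 𝓕 p (ε • ξ) :=
    ((𝓕 p).integrable.comp_smul hε.ne').mono
      ((Real.continuous_fourierChar.comp (by fun_prop)).smul
        ((𝓕 p).continuous.comp (by fun_prop))).aestronglyMeasurable (.of_forall fun ξ ↦ by simp)
  calc ∫ ε in Ioc δ R, dil d Q ε x ∂scaleMeasure
      = ∫ ε in Ioc δ R, (∫ ξ, Real.fourierChar (inner ℝ ξ x) • 𝓕 Q (ε • ξ)) ∂scaleMeasure :=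
        setIntegral_congr_fun measurableSet_Ioc fun ε hε ↦
          dil_eq_integral_fourier Q (hδ.trans hε.1) x
    _ = ∫ ξ, ∫ ε in Ioc δ R, Real.fourierChar (inner ℝ ξ x) • 𝓕 Q (ε • ξ) ∂scaleMeasure :=
        integral_integral_swap (integrable_fourierChar_smul_fourier_smul Q hδ R x)
    _ = ∫ ξ, Real.fourierChar (inner ℝ ξ x) • (𝓕 p (δ • ξ) - 𝓕 p (R • ξ)) := by
        simp only [Circle.smul_def, integral_smul, hQ]
    _ = dil d p δ x - dil d p R x := by
        simp only [smul_sub]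
        rw [integral_sub (hint hδ) (hint (hδ.trans_le hR)), ← dil_eq_integral_fourier p hδ,
          ← dil_eq_integral_fourier p (hδ.trans_le hR)]

lemma cnv_dil_dil (Φ Ψ : Ed d → ℂ) {ε : ℝ} (hε : 0 < ε) :
    cnv d (dil d Φ ε) (dil d Ψ ε) = dil d (cnv d Φ Ψ) ε := by
  ext x
  have := Measure.integral_comp_smul (μ := (volume : Measure (Ed d)))
    (fun v ↦ Φ (ε⁻¹ • x - v) * Ψ v) ε⁻¹
  rw [finrank_euclideanSpace_fin, abs_of_pos (by positivity), inv_pow, inv_inv] at this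
  have hε0 : (ε : ℂ) ^ d ≠ 0 := pow_ne_zero _ (by exact_mod_cast hε.ne')
  simp only [dil, cnv, mul_mul_mul_comm (((ε : ℂ) ^ d)⁻¹), smul_sub]
  rw [integral_const_mul, this, Complex.real_smul]
  push_cast
  field_simp

/-- The reflection `x ↦ Φ (-x)`; convolution with it is the transpose of convolution with `Φ`. -/
def reflect (Φ : 𝓢(Ed d, ℂ)) : 𝓢(Ed d, ℂ) :=
  SchwartzMap.compCLMOfContinuousLinearEquiv ℝ (ContinuousLinearEquiv.neg ℝ) Φ

lemma reflect_apply (Φ : 𝓢(Ed d, ℂ)) (x : Ed d) : reflect Φ x = Φ (-x) := rfl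

lemma fourier_reflect (Φ : 𝓢(Ed d, ℂ)) (ξ : Ed d) : 𝓕 (reflect Φ) ξ = 𝓕 Φ (-ξ) := by
  rw [SchwartzMap.fourier_coe, SchwartzMap.fourier_coe]
  exact Real.fourier_comp_linearIsometry (LinearIsometryEquiv.neg ℝ) Φ ξ

lemma integral_dil_sub_mul_dil_sub (Φ : 𝓢(Ed d, ℂ)) (Ψ : Ed d → ℂ) {ε : ℝ} (hε : 0 < ε)
    (t u : Ed d) :
    ∫ s, dil d Φ ε (s - t) * dil d Ψ ε (s - u) = dil d (cnv d (reflect Φ) Ψ) ε (t - u) := by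
  rw [← cnv_dil_dil _ _ hε, cnv,
    ← integral_sub_right_eq_self (fun s ↦ dil d (reflect Φ) ε (t - u - s) * dil d Ψ ε s) u]
  refine integral_congr_ae (.of_forall fun s ↦ ?_)
  simp only [dil, reflect_apply, ← smul_neg, sub_sub_sub_cancel_right, neg_sub]

theorem exists_reproducing_pair (Φ : 𝓢(Ed d, ℂ))
    (hΦ : ∀ ξ, ξ ≠ 0 → ∃ ε : ℝ, 0 < ε ∧ 𝓕 Φ (ε • ξ) ≠ 0) :
    ∃ Ψ p : 𝓢(Ed d, ℂ), ∫ x, Ψ x = 0 ∧ ∫ x, p x = 1 ∧ ∀ ⦃δ R : ℝ⦄, 0 < δ → δ ≤ R → ∀ t u,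
      ∫ ε in Ioc δ R, (∫ s, dil d Φ ε (s - t) * dil d Ψ ε (s - u)) ∂scaleMeasure
        = dil d p δ (t - u) - dil d p R (t - u) := by
  obtain ⟨Ψ, p, hΨ, hp, hsymbol⟩ := exists_calderon_pair (reflect Φ) fun ξ hξ ↦ by
    simpa only [fourier_reflect, smul_neg] using hΦ (-ξ) (neg_ne_zero.2 hξ)
  refine ⟨Ψ, p, hΨ, hp, fun δ R hδ hR t u ↦ ?_⟩
  set Q := SchwartzMap.convolution (ContinuousLinearMap.mul ℂ ℂ) (reflect Φ) Ψ
  have hQ : cnv d (reflect Φ) Ψ = Q := by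
    rw [cnv_eq_convolution]
    exact funext fun x ↦ (SchwartzMap.convolution_apply _ _ _ x).symm
  rw [← setIntegral_dil_scaleMeasure hδ hR (Q := Q) fun ξ ↦ ?_]
  · refine setIntegral_congr_fun measurableSet_Ioc fun ε hε ↦ ?_
    rw [← hQ]
    exact integral_dil_sub_mul_dil_sub Φ Ψ (hδ.trans hε.1) t u
  · rw [← hsymbol hδ hR]
    simp [Q, SchwartzMap.fourier_convolution, SchwartzMap.pairing_apply_apply]

end CalderonFormula

section Pairing

variable {d : ℕ} {δ R : ℝ} {f h : Ed d → ℂ}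

lemma one_add_norm_le_mul_add_norm_sub (hδ : 0 < δ) {ε : ℝ} (hε : δ ≤ ε) (s u : Ed d) :
    1 + ‖s‖ ≤ (1 + ‖u‖) * (1 + δ⁻¹) * (ε + ‖s - u‖) := by
  have hδε : 1 ≤ δ⁻¹ * ε := by rwa [← div_eq_inv_mul, one_le_div hδ]
  have hδs : 0 ≤ δ⁻¹ * ‖s - u‖ := by positivity
  calc 1 + ‖s‖ ≤ (1 + ‖u‖) * (1 + ‖s - u‖) := by
        linarith [norm_le_norm_add_norm_sub' s u, mul_nonneg (norm_nonneg u) (norm_nonneg (s - u))]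
    _ ≤ (1 + ‖u‖) * ((1 + δ⁻¹) * (ε + ‖s - u‖)) := by
        gcongr
        linarith [hδ.le.trans hε]
    _ = _ := (mul_assoc _ _ _).symm

lemma exists_norm_dil_mul_norm_dil_le (Φ Ψ : 𝓢(Ed d, ℂ)) (hδ : 0 < δ) (R : ℝ) :
    ∃ C, ∀ ε ∈ Ioc δ R, ∀ s t u : Ed d, ‖u‖ ≤ 1 →
      ‖dil d Φ ε (s - t)‖ * ‖dil d Ψ ε (s - u)‖ ≤ C * (poissonWeight s * poissonWeight t) := by
  obtain ⟨C₁, hC₁, hΦ⟩ := exists_norm_dil_le_poissonWeight Φ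
  obtain ⟨C₂, hC₂, hΨ⟩ := exists_norm_dil_le Ψ (d + 2)
  set A := 1 + δ⁻¹
  refine ⟨C₁ * A ^ (d + 1) * R * (C₂ * R ^ (d + 2) * (2 * A) ^ (d + (d + 2))),
    fun ε hε s t u hu ↦ ?_⟩
  have hε0 : 0 < ε := hδ.trans hε.1
  have hR : 0 < R := hε0.trans_le hε.2
  have hA : 0 < A := by positivity
  have hs : (1 + ‖s‖) / (2 * A) ≤ ε + ‖s - u‖ := by
    rw [div_le_iff₀' (by positivity)]
    refine (one_add_norm_le_mul_add_norm_sub hδ hε.1.le s u).trans ?_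
    gcongr
    linarith
  have boundΦ : ‖dil d Φ ε (s - t)‖ ≤ C₁ * ((1 + ‖s‖) * A) ^ (d + 1) * R * poissonWeight t := by
    have ht := one_add_norm_le_mul_add_norm_sub hδ hε.1.le t s
    rw [norm_sub_rev] at ht
    refine (hΦ _ ε (s - t) t hε0 ht).trans ?_
    have := (poissonWeight_pos t).le
    gcongr
    exact hε.2
  have boundΨ : ‖dil d Ψ ε (s - u)‖
      ≤ C₂ * R ^ (d + 2) / ((1 + ‖s‖) / (2 * A)) ^ (d + (d + 2)) := by
    refine (hΨ ε (s - u) hε0).trans ?_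
    gcongr
    exact hε.2
  refine (mul_le_mul boundΦ boundΨ (norm_nonneg _) ((norm_nonneg _).trans boundΦ)).trans_eq ?_
  rw [show d + (d + 2) = (d + 1) + (d + 1) by ring, div_pow, pow_add (1 + ‖s‖), mul_pow (1 + ‖s‖)]
  simp only [poissonWeight]
  field_simp

lemma halfSpaceMeasure_restrict_slab (I : Set ℝ) : (halfSpaceMeasure d).restrict (I ×ˢ univ)
    = (scaleMeasure.restrict I).prod volume := by
  rw [halfSpaceMeasure, ← Measure.prod_restrict, Measure.restrict_univ]

lemma integrable_slab_pairing (Φ Ψ : 𝓢(Ed d, ℂ)) (hf : Admissible f) (hh : Integrable h)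
    (hsupp : Function.support h ⊆ ball 0 1) (hδ : 0 < δ) (R : ℝ) :
    Integrable (fun q : (ℝ × Ed d) × Ed d × Ed d ↦ dil d Φ q.1.1 (q.1.2 - q.2.1)
        * dil d Ψ q.1.1 (q.1.2 - q.2.2) * (f q.2.1 * h q.2.2))
      (((halfSpaceMeasure d).restrict (Ioc δ R ×ˢ univ)).prod (volume.prod volume)) := by
  obtain ⟨C, hC⟩ := exists_norm_dil_mul_norm_dil_le Φ Ψ hδ R
  have : IsFiniteMeasure (scaleMeasure.restrict (Ioc δ R)) :=
    isFiniteMeasure_restrict.2 (scaleMeasure_Ioc_lt_top hδ R).ne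
  have dominating : Integrable (fun q : (ℝ × Ed d) × Ed d × Ed d ↦
      C * poissonWeight q.1.2 * (‖f q.2.1‖ * poissonWeight q.2.1 * ‖h q.2.2‖))
      (((halfSpaceMeasure d).restrict (Ioc δ R ×ˢ univ)).prod (volume.prod volume)) := by
    rw [halfSpaceMeasure_restrict_slab]
    exact ((integrable_poissonWeight.const_mul C).comp_snd _).mul_prod
      (hf.integrable_norm_mul_poissonWeight.mul_prod hh.norm)
  refine dominating.mono' ?_ ?_
  · have mΦ : Measurable fun q : (ℝ × Ed d) × Ed d × Ed d ↦ dil d Φ q.1.1 (q.1.2 - q.2.1) :=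
      (measurable_dil Φ.continuous.measurable).comp
        (f := fun q : (ℝ × Ed d) × Ed d × Ed d ↦ (q.1.1, q.1.2 - q.2.1)) (by fun_prop)
    have mΨ : Measurable fun q : (ℝ × Ed d) × Ed d × Ed d ↦ dil d Ψ q.1.1 (q.1.2 - q.2.2) :=
      (measurable_dil Ψ.continuous.measurable).comp
        (f := fun q : (ℝ × Ed d) × Ed d × Ed d ↦ (q.1.1, q.1.2 - q.2.2)) (by fun_prop)
    exact (mΦ.mul mΨ).aestronglyMeasurable.mul
      ((hf.measurable.comp (by fun_prop)).aestronglyMeasurable.mul hh.1.comp_snd.comp_snd)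
  · filter_upwards [Measure.quasiMeasurePreserving_fst.ae
      (ae_restrict_mem (measurableSet_Ioc.prod MeasurableSet.univ))] with q hq
    rcases eq_or_ne (h q.2.2) 0 with h0 | h0
    · simp [h0]
    · rw [norm_mul, norm_mul, norm_mul]
      calc _ ≤ C * (poissonWeight q.1.2 * poissonWeight q.2.1) * (‖f q.2.1‖ * ‖h q.2.2‖) := by
            exact mul_le_mul_of_nonneg_right
              (hC _ hq.1 _ _ _ (mem_ball_zero_iff.1 (hsupp h0)).le) (by positivity)
        _ = _ := by ring

lemma setIntegral_cnv_mul_cnv (Φ Ψ : 𝓢(Ed d, ℂ)) (hf : Admissible f) (hh : Integrable h)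
    (hsupp : Function.support h ⊆ ball 0 1) (hδ : 0 < δ) (R : ℝ) :
    ∫ p in Ioc δ R ×ˢ univ, cnv d (dil d Φ p.1) f p.2 * cnv d (dil d Ψ p.1) h p.2
        ∂halfSpaceMeasure d
      = ∫ b : Ed d × Ed d, (∫ ε in Ioc δ R,
          (∫ s, dil d Φ ε (s - b.1) * dil d Ψ ε (s - b.2)) ∂scaleMeasure) * (f b.1 * h b.2) := by
  have hint := integrable_slab_pairing Φ Ψ hf hh hsupp hδ R
  calc _ = ∫ p in Ioc δ R ×ˢ univ, (∫ b : Ed d × Ed d, dil d Φ p.1 (p.2 - b.1)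
        * dil d Ψ p.1 (p.2 - b.2) * (f b.1 * h b.2)) ∂halfSpaceMeasure d := by
        refine integral_congr_ae (.of_forall fun p ↦ ?_)
        simp only [cnv, mul_mul_mul_comm]
        exact (integral_prod_mul (fun t ↦ dil d Φ p.1 (p.2 - t) * f t)
          fun u ↦ dil d Ψ p.1 (p.2 - u) * h u).symm
    _ = ∫ b : Ed d × Ed d, ∫ p in Ioc δ R ×ˢ univ, dil d Φ p.1 (p.2 - b.1)
        * dil d Ψ p.1 (p.2 - b.2) * (f b.1 * h b.2) ∂halfSpaceMeasure d :=
        integral_integral_swap hint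
    _ = _ := by
        refine integral_congr_ae ?_
        filter_upwards [hint.prod_left_ae] with b hb
        rw [halfSpaceMeasure_restrict_slab] at hb ⊢
        rw [integral_prod _ hb]
        simp only [integral_mul_const]

lemma integrable_dil_sub_mul (p : 𝓢(Ed d, ℂ)) (hf : Admissible f) (hh : Integrable h)
    (hsupp : Function.support h ⊆ ball 0 1) {ε : ℝ} (hε : 0 < ε) :
    Integrable fun b : Ed d × Ed d ↦ dil d p ε (b.1 - b.2) * (f b.1 * h b.2) := by
  obtain ⟨C, -, hp⟩ := exists_norm_dil_le_poissonWeight p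
  have dominating : Integrable fun b : Ed d × Ed d ↦
      C * (2 * (1 + ε⁻¹)) ^ (d + 1) * ε * (‖f b.1‖ * poissonWeight b.1 * ‖h b.2‖) :=
    (hf.integrable_norm_mul_poissonWeight.mul_prod hh.norm).const_mul _
  refine dominating.mono' ?_ (.of_forall fun b ↦ ?_)
  · have := continuous_dil p.continuous ε
    exact (Continuous.aestronglyMeasurable (by fun_prop)).mul
      ((hf.measurable.comp measurable_fst).aestronglyMeasurable.mul hh.1.comp_snd)
  · rcases eq_or_ne (h b.2) 0 with h0 | h0
    · simp [h0]
    · have hb : 1 + ‖b.1‖ ≤ 2 * (1 + ε⁻¹) * (ε + ‖b.1 - b.2‖) := by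
        refine (one_add_norm_le_mul_add_norm_sub hε le_rfl b.1 b.2).trans ?_
        gcongr
        linarith [mem_ball_zero_iff.1 (hsupp h0)]
      rw [norm_mul, norm_mul]
      calc _ ≤ C * (2 * (1 + ε⁻¹)) ^ (d + 1) * ε * poissonWeight b.1 * (‖f b.1‖ * ‖h b.2‖) := by
            exact mul_le_mul_of_nonneg_right (hp _ _ _ _ hε hb) (by positivity)
        _ = _ := by ring

lemma integral_dil_sub_mul (p : 𝓢(Ed d, ℂ)) (hf : Admissible f) (hh : Integrable h)
    (hsupp : Function.support h ⊆ ball 0 1) {ε : ℝ} (hε : 0 < ε) :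
    ∫ b : Ed d × Ed d, dil d p ε (b.1 - b.2) * (f b.1 * h b.2)
      = ∫ t, f t * cnv d (dil d p ε) h t := by
  rw [Measure.volume_eq_prod, integral_prod _ (integrable_dil_sub_mul p hf hh hsupp hε)]
  simp only [cnv, ← integral_const_mul, mul_left_comm]

theorem exists_slab_pairing_eq (Φ : 𝓢(Ed d, ℂ))
    (hΦ : ∀ ξ, ξ ≠ 0 → ∃ ε : ℝ, 0 < ε ∧ 𝓕 Φ (ε • ξ) ≠ 0) :
    ∃ Ψ p : 𝓢(Ed d, ℂ), ∫ x, Ψ x = 0 ∧ ∫ x, p x = 1 ∧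
      ∀ ⦃f h : Ed d → ℂ⦄, Admissible f → Integrable h → Function.support h ⊆ ball 0 1 →
      ∀ ⦃δ R : ℝ⦄, 0 < δ → δ ≤ R →
        ∫ q in Ioc δ R ×ˢ univ, cnv d (dil d Φ q.1) f q.2 * cnv d (dil d Ψ q.1) h q.2
            ∂halfSpaceMeasure d
          = (∫ t, f t * cnv d (dil d p δ) h t) - ∫ t, f t * cnv d (dil d p R) h t := by
  obtain ⟨Ψ, p, hΨ, hp, hrep⟩ := exists_reproducing_pair Φ hΦ
  refine ⟨Ψ, p, hΨ, hp, fun f h hf hh hsupp δ R hδ hR ↦ ?_⟩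
  rw [setIntegral_cnv_mul_cnv Φ Ψ hf hh hsupp hδ]
  simp only [hrep hδ hR, sub_mul]
  rw [integral_sub (integrable_dil_sub_mul p hf hh hsupp hδ)
      (integrable_dil_sub_mul p hf hh hsupp (hδ.trans_le hR)),
    integral_dil_sub_mul p hf hh hsupp hδ, integral_dil_sub_mul p hf hh hsupp (hδ.trans_le hR)]

end Pairing

section CauchySchwarz

lemma ennreal_rpow_half_sq (x : ℝ≥0∞) : (x ^ (1 / 2 : ℝ)) ^ 2 = x := by
  rw [← ENNReal.rpow_mul_natCast]
  norm_num

variable {α : Type*} [MeasurableSpace α] {μ : Measure α} {F G W : α → ℝ≥0∞}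

lemma lintegral_mul_sq_le (hF : AEMeasurable F μ) (hG : AEMeasurable G μ) :
    (∫⁻ x, F x * G x ∂μ) ^ 2 ≤ (∫⁻ x, F x ^ 2 ∂μ) * ∫⁻ x, G x ^ 2 ∂μ := by
  have h := ENNReal.lintegral_mul_le_Lp_mul_Lq μ Real.HolderConjugate.two_two hF hG
  simpa only [Pi.mul_apply, ENNReal.rpow_ofNat, mul_pow, ennreal_rpow_half_sq]
    using pow_le_pow_left' h 2

lemma lintegral_mul_sq_le_of_weight (hF : AEMeasurable F μ) (hG : AEMeasurable G μ)
    (hW : AEMeasurable W μ) (hW0 : ∀ x, W x ≠ 0) (hWt : ∀ x, W x ≠ ∞) :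
    (∫⁻ x, F x * G x ∂μ) ^ 2 ≤ (∫⁻ x, F x ^ 2 * (W x)⁻¹ ∂μ) * ∫⁻ x, G x ^ 2 * W x ∂μ := by
  have inv_mul_half (x : α) : (W x)⁻¹ ^ (1 / 2 : ℝ) * W x ^ (1 / 2 : ℝ) = 1 := by
    rw [← ENNReal.mul_rpow_of_nonneg _ _ (by norm_num), ENNReal.inv_mul_cancel (hW0 x) (hWt x),
      ENNReal.one_rpow]
  have h := lintegral_mul_sq_le (hF.mul (hW.inv.pow_const (1 / 2 : ℝ)))
    (hG.mul (hW.pow_const (1 / 2 : ℝ)))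
  simpa only [Pi.mul_apply, Pi.inv_apply, mul_mul_mul_comm, inv_mul_half, mul_one, mul_pow,
    ennreal_rpow_half_sq] using h

end CauchySchwarz

section CarlesonBox

variable {d : ℕ} {R : ℝ}

/-- The Carleson box `(0, R] × B(0, R)` over the ball of radius `R` centred at the origin. -/
def carlesonBox (d : ℕ) (R : ℝ) : Set (ℝ × Ed d) := Ioc 0 R ×ˢ ball 0 R

lemma measurableSet_carlesonBox (d : ℕ) (R : ℝ) : MeasurableSet (carlesonBox d R) :=
  measurableSet_Ioc.prod measurableSet_ball

lemma halfSpaceMeasure_restrict_carlesonBox (d : ℕ) (R : ℝ) :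
    (halfSpaceMeasure d).restrict (carlesonBox d R)
      = (scaleMeasure.restrict (Ioc 0 R)).prod (volume.restrict (ball 0 R)) :=
  (Measure.prod_restrict _ _).symm

lemma volume_ball_zero (d : ℕ) (hR : 0 < R) :
    volume (ball (0 : Ed d) R) = ENNReal.ofReal R ^ d * volume (ball (0 : Ed d) 1) := by
  rw [Measure.addHaar_ball_of_pos _ _ hR, finrank_euclideanSpace_fin, ENNReal.ofReal_pow hR.le]

lemma setLIntegral_scaleMeasure_enorm_sq_le (R : ℝ) :
    ∫⁻ ε in Ioc 0 R, ‖ε‖ₑ ^ 2 ∂scaleMeasure ≤ ENNReal.ofReal R ^ 2 := by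
  rw [scaleMeasure_restrict_Ioc le_rfl,
    lintegral_withDensity_eq_lintegral_mul _ (by fun_prop) (by fun_prop)]
  calc ∫⁻ ε in Ioc 0 R, ENNReal.ofReal ε⁻¹ * ‖ε‖ₑ ^ 2 ≤ ∫⁻ _ in Ioc 0 R, ENNReal.ofReal R := by
        refine setLIntegral_mono measurable_const fun ε hε ↦ ?_
        rw [Real.enorm_of_nonneg hε.1.le, pow_two, ← mul_assoc,
          ← ENNReal.ofReal_mul (inv_nonneg.2 hε.1.le), inv_mul_cancel₀ hε.1.ne', ENNReal.ofReal_one,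
          one_mul]
        exact ENNReal.ofReal_le_ofReal hε.2
    _ = ENNReal.ofReal R ^ 2 := by simp [pow_two]

lemma setLIntegral_carlesonBox_enorm_fst_sq_le (d : ℕ) (hR : 0 < R) :
    ∫⁻ p in carlesonBox d R, ‖p.1‖ₑ ^ 2 ∂halfSpaceMeasure d
      ≤ volume (ball (0 : Ed d) 1) * ENNReal.ofReal R ^ (d + 2) := by
  have h := lintegral_prod_mul (μ := scaleMeasure.restrict (Ioc 0 R))
    (ν := volume.restrict (ball (0 : Ed d) R)) (f := fun ε ↦ ‖ε‖ₑ ^ 2) (g := fun _ ↦ 1)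
    (by fun_prop) (by fun_prop)
  simp only [mul_one, lintegral_one, Measure.restrict_apply_univ] at h
  rw [halfSpaceMeasure_restrict_carlesonBox, h, volume_ball_zero d hR]
  calc _ ≤ ENNReal.ofReal R ^ 2 * (ENNReal.ofReal R ^ d * volume (ball (0 : Ed d) 1)) := by
        gcongr; exact setLIntegral_scaleMeasure_enorm_sq_le R
    _ = _ := by ring

lemma memLp_two_fst_carlesonBox (d : ℕ) (hR : 0 < R) :
    MemLp (fun p : ℝ × Ed d ↦ p.1) 2 ((halfSpaceMeasure d).restrict (carlesonBox d R)) := by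
  refine memLp_two_of_lintegral_enorm_sq_lt_top (by fun_prop)
    ((setLIntegral_carlesonBox_enorm_fst_sq_le d hR).trans_lt ?_)
  exact ENNReal.mul_lt_top measure_ball_lt_top (by finiteness)

lemma Admissible.integrable_dil_mul {f : Ed d → ℂ} (hf : Admissible f) (Φ : 𝓢(Ed d, ℂ)) {ε : ℝ}
    (hε : 0 < ε) (s : Ed d) : Integrable fun t ↦ dil d Φ ε (s - t) * f t := by
  obtain ⟨C, -, hΦ⟩ := exists_norm_dil_le_poissonWeight Φ
  refine (hf.integrable_norm_mul_poissonWeight.const_mul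
    (C * ((1 + ‖s‖) * (1 + ε⁻¹)) ^ (d + 1) * ε)).mono' ?_ (.of_forall fun t ↦ ?_)
  · have := continuous_dil Φ.continuous ε
    exact (Continuous.aestronglyMeasurable (by fun_prop)).mul hf.measurable.aestronglyMeasurable
  · have ht := one_add_norm_le_mul_add_norm_sub hε le_rfl t s
    rw [norm_sub_rev] at ht
    rw [norm_mul, mul_comm ‖f t‖, ← mul_assoc]
    gcongr
    exact hΦ _ _ _ _ hε ht

lemma Admissible.cnv_dil_eq_add {f : Ed d → ℂ} (hf : Admissible f) (Φ : 𝓢(Ed d, ℂ)) {ε : ℝ}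
    (hε : 0 < ε) (s : Ed d) {A : Set (Ed d)} (hA : MeasurableSet A) :
    cnv d (dil d Φ ε) f s
      = cnv d (dil d Φ ε) (A.indicator f) s + cnv d (dil d Φ ε) (Aᶜ.indicator f) s := by
  have mul_indicator (B : Set (Ed d)) : (fun t ↦ dil d Φ ε (s - t) * B.indicator f t)
      = B.indicator fun t ↦ dil d Φ ε (s - t) * f t :=
    funext fun _ ↦ (indicator_mul_right B (fun t ↦ dil d Φ ε (s - t)) f).symm
  simp only [cnv, mul_indicator]
  rw [integral_indicator hA, integral_indicator hA.compl,
    integral_add_compl hA (hf.integrable_dil_mul Φ hε s)]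

lemma Admissible.exists_norm_cnv_dil_indicator_compl_ball_le {f : Ed d → ℂ} (hf : Admissible f)
    (Φ : 𝓢(Ed d, ℂ)) (hR : 0 < R) : ∃ K, ∀ ε s, 0 < ε → s ∈ ball 0 R →
      ‖cnv d (dil d Φ ε) ((ball 0 (2 * R))ᶜ.indicator f) s‖ ≤ K * ε := by
  obtain ⟨C, hC, hΦ⟩ := exists_norm_dil_le_poissonWeight Φ
  set k := 2 * (1 + (2 * R)⁻¹)
  refine ⟨C * k ^ (d + 1) * ∫ t, ‖f t‖ * poissonWeight t, fun ε s hε hs ↦ ?_⟩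
  rw [mul_right_comm, ← integral_const_mul]
  refine norm_integral_le_of_norm_le (hf.integrable_norm_mul_poissonWeight.const_mul _)
    (.of_forall fun t ↦ ?_)
  have hw := (poissonWeight_pos t).le
  by_cases ht : t ∈ ball (0 : Ed d) (2 * R)
  · rw [indicator_of_notMem (notMem_compl_iff.2 ht), mul_zero, norm_zero]
    positivity
  · have far : 1 + ‖t‖ ≤ k * (ε + ‖s - t‖) := by
      have hsR : ‖s‖ < R := mem_ball_zero_iff.1 hs
      have htR : 2 * R ≤ ‖t‖ := by simpa using ht
      have hst : ‖t‖ ≤ 2 * (ε + ‖s - t‖) := by linarith [norm_le_norm_add_norm_sub s t]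
      calc 1 + ‖t‖ ≤ (2 * R)⁻¹ * ‖t‖ + ‖t‖ := by
            gcongr
            rwa [← div_eq_inv_mul, one_le_div (by positivity)]
        _ = (1 + (2 * R)⁻¹) * ‖t‖ := by ring
        _ ≤ (1 + (2 * R)⁻¹) * (2 * (ε + ‖s - t‖)) := by gcongr
        _ = _ := by ring
    rw [indicator_of_mem (mem_compl ht), norm_mul, mul_comm ‖f t‖, ← mul_assoc]
    gcongr
    exact hΦ _ _ _ _ hε far

lemma Admissible.memLp_two_cnv_dil_carlesonBox {f : Ed d → ℂ} (hf : Admissible f)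
    (Φ : 𝓢(Ed d, ℂ)) (hΦ : ∫ x, Φ x = 0) (hR : 0 < R) :
    MemLp (fun p : ℝ × Ed d ↦ cnv d (dil d Φ p.1) f p.2) 2
      ((halfSpaceMeasure d).restrict (carlesonBox d R)) := by
  obtain ⟨C, hC⟩ := exists_lintegral_enorm_cnv_dil_sq_le Φ hΦ
  obtain ⟨K, hK⟩ := hf.exists_norm_cnv_dil_indicator_compl_ball_le Φ hR
  have meas (A : Set (Ed d)) (hA : MeasurableSet A) : AEStronglyMeasurable
      (fun p : ℝ × Ed d ↦ cnv d (dil d Φ p.1) (A.indicator f) p.2)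
      ((halfSpaceMeasure d).restrict (carlesonBox d R)) :=
    (measurable_cnv_dil Φ.continuous.measurable (hf.measurable.indicator hA)).aestronglyMeasurable
  have near2 : MemLp ((ball 0 (2 * R)).indicator f) 2 := hf.memLp_indicator_ball (by positivity)
  have near1 : Integrable ((ball 0 (2 * R)).indicator f) :=
    integrable_of_memLp_two near2 support_indicator_subset measure_ball_lt_top.ne
  have near := memLp_two_of_lintegral_enorm_sq_lt_top (meas _ measurableSet_ball)
    (((setLIntegral_le_lintegral _ _).trans
      (hC _ (hf.measurable.indicator measurableSet_ball) near1 near2)).trans_lt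
      (ENNReal.mul_lt_top ENNReal.coe_lt_top (lintegral_enorm_sq_lt_top near2)))
  have far := ((memLp_two_fst_carlesonBox d hR).const_mul K).mono' (meas _ measurableSet_ball.compl)
    (ae_restrict_of_forall_mem (measurableSet_carlesonBox d R) fun p hp ↦ hK p.1 p.2 hp.1.1 hp.2)
  refine (near.add far).ae_eq (ae_restrict_of_forall_mem (measurableSet_carlesonBox d R) ?_)
  exact fun p hp ↦ (hf.cnv_dil_eq_add Φ hp.1.1 p.2 measurableSet_ball).symm

lemma Admissible.setLIntegral_carlesonBox_enorm_cnv_dil_sq {f : Ed d → ℂ} (hf : Admissible f)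
    (Φ : 𝓢(Ed d, ℂ)) (hΦ : ∫ x, Φ x = 0) (hR : 0 < R) :
    ∫⁻ p in carlesonBox d R, ‖cnv d (dil d Φ p.1) f p.2‖ₑ ^ 2 ∂halfSpaceMeasure d
      = ENNReal.ofReal (∫ s in ball 0 R, ∫ ε in Ioc 0 R, ‖cnv d (dil d Φ ε) f s‖ ^ 2 / ε) := by
  have hL2 := hf.memLp_two_cnv_dil_carlesonBox Φ hΦ hR
  calc _ = ENNReal.ofReal (∫ p in carlesonBox d R, ‖cnv d (dil d Φ p.1) f p.2‖ ^ 2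
        ∂halfSpaceMeasure d) := lintegral_enorm_sq_eq_ofReal hL2
    _ = _ := by
        have hint := (memLp_two_iff_integrable_sq_norm hL2.1).1 hL2
        rw [halfSpaceMeasure_restrict_carlesonBox] at hint ⊢
        rw [integral_prod_symm _ hint]
        simp only [setIntegral_scaleMeasure_Ioc le_rfl, smul_eq_mul, div_eq_inv_mul]

/-- The Carleson condition on `|Φ_ε * f(s)|² ds dε/ε` over the boxes above the balls centred at
`z`, with constant `N²`. -/
def CarlesonBoundAt (Φ f : Ed d → ℂ) (N : ℝ) (z : Ed d) : Prop :=
  ∀ r : ℝ, 0 < r → ∫ s in ball z r, ∫ ε in Ioc (0 : ℝ) r, ‖cnv d (dil d Φ ε) f s‖ ^ 2 / ε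
    ≤ N ^ 2 * (volume (ball z r)).toReal

/-- A quantity comparable to `1` plus the size of the smallest Carleson box containing `p`; its
powers are the weights against which the half-space pairing is estimated. -/
def boxScale (p : ℝ × Ed d) : ℝ := 1 + |p.1| + ‖p.2‖

lemma one_le_boxScale (p : ℝ × Ed d) : 1 ≤ boxScale p := by
  unfold boxScale; linarith [abs_nonneg p.1, norm_nonneg p.2]

lemma continuous_boxScale : Continuous (boxScale (d := d)) := by unfold boxScale; fun_prop

lemma lintegral_mul_inv_boxScale_pow_le {G : ℝ × Ed d → ℝ≥0∞} (hG : Measurable G) {A : ℝ≥0∞}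
    {m : ℕ} (hA : ∀ R, 0 < R →
      ∫⁻ p in carlesonBox d R, G p ∂halfSpaceMeasure d ≤ A * ENNReal.ofReal R ^ m) :
    ∫⁻ p, G p * (ENNReal.ofReal (boxScale p) ^ (m + 1))⁻¹ ∂halfSpaceMeasure d
      ≤ A * 2 ^ (m + 1) := by
  have dyadic : ∀ᵐ p ∂halfSpaceMeasure d, G p * (ENNReal.ofReal (boxScale p) ^ (m + 1))⁻¹
      ≤ ∑' k : ℕ, ((2 ^ k) ^ (m + 1))⁻¹ * (carlesonBox d (2 ^ (k + 1))).indicator G p := by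
    filter_upwards [ae_halfSpaceMeasure_pos d] with p hp
    obtain ⟨k, hk, hk'⟩ := exists_nat_pow_near (one_le_boxScale p) one_lt_two
    have hmem : p ∈ carlesonBox d (2 ^ (k + 1)) := by
      rw [boxScale, abs_of_pos hp] at hk'
      exact ⟨⟨hp, by linarith [norm_nonneg p.2]⟩, mem_ball_zero_iff.2 (by linarith)⟩
    refine le_trans ?_ (ENNReal.le_tsum k)
    rw [indicator_of_mem hmem, mul_comm]
    gcongr
    simpa [ENNReal.ofReal_pow] using ENNReal.ofReal_le_ofReal hk
  calc _ ≤ ∑' k : ℕ, ∫⁻ p, ((2 ^ k) ^ (m + 1))⁻¹ * (carlesonBox d (2 ^ (k + 1))).indicator G p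
        ∂halfSpaceMeasure d := by
        rw [← lintegral_tsum fun k ↦
          ((hG.indicator (measurableSet_carlesonBox _ _)).const_mul _).aemeasurable]
        exact lintegral_mono_ae dyadic
    _ ≤ ∑' k : ℕ, A * 2 ^ m * 2⁻¹ ^ k := by
        refine ENNReal.tsum_le_tsum fun k ↦ ?_
        rw [lintegral_const_mul _ (hG.indicator (measurableSet_carlesonBox _ _)),
          lintegral_indicator (measurableSet_carlesonBox _ _)]
        refine (mul_le_mul_right (hA _ (by positivity)) _).trans_eq ?_
        rw [ENNReal.ofReal_pow zero_le_two, ENNReal.ofReal_ofNat]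
        calc ((2 ^ k) ^ (m + 1))⁻¹ * (A * (2 ^ (k + 1)) ^ m)
            = ((2 ^ k) ^ m * ((2 ^ k) ^ m)⁻¹) * (A * 2 ^ m * (2 ^ k)⁻¹) := by
              rw [pow_succ _ m, ENNReal.mul_inv (.inr (by finiteness)) (.inr (by positivity))]
              ring
          _ = A * 2 ^ m * 2⁻¹ ^ k := by
              rw [ENNReal.mul_inv_cancel (by positivity) (by finiteness), one_mul,
                ENNReal.inv_pow]
    _ = A * 2 ^ (m + 1) := by
        rw [ENNReal.tsum_mul_left, ENNReal.tsum_geometric_two, mul_assoc, ← pow_succ]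

theorem exists_lintegral_enorm_cnv_dil_sq_mul_inv_boxScale_le (Φ : 𝓢(Ed d, ℂ))
    (hΦ : ∫ x, Φ x = 0) : ∃ C : ℝ≥0, ∀ f N, Admissible f → CarlesonBoundAt Φ f N 0 →
      ∫⁻ p, ‖cnv d (dil d Φ p.1) f p.2‖ₑ ^ 2 * (ENNReal.ofReal (boxScale p) ^ (d + 1))⁻¹
        ∂halfSpaceMeasure d ≤ C * ENNReal.ofReal (N ^ 2) := by
  refine ⟨(volume (ball (0 : Ed d) 1)).toNNReal * 2 ^ (d + 1), fun f N hf hN ↦ ?_⟩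
  have on_boxes (R : ℝ) (hR : 0 < R) :
      ∫⁻ p in carlesonBox d R, ‖cnv d (dil d Φ p.1) f p.2‖ₑ ^ 2 ∂halfSpaceMeasure d
        ≤ ENNReal.ofReal (N ^ 2) * volume (ball (0 : Ed d) 1) * ENNReal.ofReal R ^ d := by
    rw [hf.setLIntegral_carlesonBox_enorm_cnv_dil_sq Φ hΦ hR, mul_assoc, mul_comm (volume _),
      ← volume_ball_zero d hR]
    refine (ENNReal.ofReal_le_ofReal (hN R hR)).trans_eq ?_
    rw [ENNReal.ofReal_mul (sq_nonneg N), ENNReal.ofReal_toReal measure_ball_lt_top.ne]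
  refine (lintegral_mul_inv_boxScale_pow_le ((measurable_cnv_dil Φ.continuous.measurable
    hf.measurable).enorm.pow_const 2) on_boxes).trans_eq ?_
  push_cast
  rw [ENNReal.coe_toNNReal measure_ball_lt_top.ne]
  ring

end CarlesonBox

section Cancellation

variable {d : ℕ} {h : Ed d → ℂ}

lemma norm_cnv_le_of_integral_eq_zero {g : Ed d → ℂ} {s : Ed d} {c : ℂ} {C : ℝ}
    (hgh : Integrable fun t ↦ g (s - t) * h t) (hh : Integrable h) (h0 : ∫ t, h t = 0)
    (hg : ∀ t, h t ≠ 0 → ‖g (s - t) - c‖ ≤ C) : ‖cnv d g h s‖ ≤ C * ∫ t, ‖h t‖ := by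
  have subtract : cnv d g h s = cnv d (fun x ↦ g x - c) h s := by
    simp only [cnv, sub_mul]
    rw [integral_sub hgh (hh.const_mul c), integral_const_mul, h0, mul_zero, sub_zero]
  rw [subtract]
  exact norm_cnv_le hg hh

lemma exists_norm_cnv_dil_le_of_integral_eq_zero (Θ : 𝓢(Ed d, ℂ)) (j : ℕ) :
    ∃ C, 0 < C ∧ ∀ ⦃h : Ed d → ℂ⦄, Integrable h → Function.support h ⊆ ball 0 1 →
      ∫ t, h t = 0 → ∀ ⦃ε : ℝ⦄ ⦃s : Ed d⦄, 0 < ε → 2 ≤ ε + ‖s‖ →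
        ‖cnv d (dil d Θ ε) h s‖ ≤ C * ε ^ j / (ε + ‖s‖) ^ (d + 1 + j) * ∫ t, ‖h t‖ := by
  obtain ⟨C, hC, hΘ⟩ := exists_norm_dil_sub_dil_le Θ j
  refine ⟨C, hC, fun h hh hsupp h0 ε s hε hs ↦ ?_⟩
  have hcont := continuous_dil Θ.continuous ε
  obtain ⟨K, -, hK⟩ := exists_norm_dil_le_const Θ hε
  have hgh : Integrable fun t ↦ dil d Θ ε (s - t) * h t :=
    hh.bdd_mul (c := K) (Continuous.aestronglyMeasurable (by fun_prop)) (.of_forall fun _ ↦ hK _)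
  refine norm_cnv_le_of_integral_eq_zero hgh hh h0 (c := dil d Θ ε s) fun t ht ↦ ?_
  have ht1 : ‖t‖ ≤ 1 := (mem_ball_zero_iff.1 (hsupp ht)).le
  refine (hΘ ε s t hε (by linarith)).trans ?_
  gcongr ?_ / _
  exact mul_le_of_le_one_right (by positivity) ht1

/-- The square-integrable functions of mean zero supported in the unit ball, against which the
oscillation of a function on that ball is tested (atoms, without the size normalisation). -/
structure IsUnitAtom (h : Ed d → ℂ) : Prop where
  measurable : Measurable h
  memLp_two : MemLp h 2
  support_subset : Function.support h ⊆ ball 0 1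
  integral_eq_zero : ∫ t, h t = 0

lemma IsUnitAtom.integrable (hh : IsUnitAtom h) : Integrable h :=
  integrable_of_memLp_two hh.memLp_two hh.support_subset measure_ball_lt_top.ne

lemma sq_lintegral_enorm_le (hh : Measurable h) (hsupp : Function.support h ⊆ ball 0 1) :
    (∫⁻ t, ‖h t‖ₑ) ^ 2 ≤ volume (ball (0 : Ed d) 1) * ∫⁻ t, ‖h t‖ₑ ^ 2 := by
  have on_ball : ∫⁻ t in ball 0 1, ‖h t‖ₑ = ∫⁻ t, ‖h t‖ₑ :=
    setLIntegral_eq_of_support_subset ((Function.support_subset_iff'.2 fun t ht ↦ by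
      rw [Function.notMem_support.1 fun hs ↦ ht (hsupp hs), enorm_zero]))
  have cauchy_schwarz := lintegral_mul_sq_le (μ := volume.restrict (ball (0 : Ed d) 1))
    (F := fun _ ↦ 1) aemeasurable_const hh.enorm.aemeasurable
  simp only [one_mul, one_pow, lintegral_one, Measure.restrict_apply_univ] at cauchy_schwarz
  rw [on_ball] at cauchy_schwarz
  exact cauchy_schwarz.trans (by gcongr; exact Measure.restrict_le_self)

lemma exists_norm_cnv_dil_sq_mul_boxScale_pow_le (Θ : 𝓢(Ed d, ℂ)) :
    ∃ K, ∀ ⦃h : Ed d → ℂ⦄, IsUnitAtom h → ∀ p : ℝ × Ed d, 0 < p.1 → 2 ≤ p.1 + ‖p.2‖ →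
      ‖cnv d (dil d Θ p.1) h p.2‖ ^ 2 * boxScale p ^ (d + 1)
        ≤ K * (∫ t, ‖h t‖) ^ 2 * (p.1 ^ 2 * (boxScale p ^ (d + 2 + 1))⁻¹) := by
  obtain ⟨C, hC, hΘ⟩ := exists_norm_cnv_dil_le_of_integral_eq_zero Θ 1
  refine ⟨(C * 2 ^ (d + 2)) ^ 2, fun h hh p hp hfar ↦ ?_⟩
  have hb : boxScale p ≤ 2 * (p.1 + ‖p.2‖) := by rw [boxScale, abs_of_pos hp]; linarith
  have hb0 : 0 < boxScale p := zero_lt_one.trans_le (one_le_boxScale p)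
  have decay : ‖cnv d (dil d Θ p.1) h p.2‖
      ≤ C * 2 ^ (d + 2) * p.1 / boxScale p ^ (d + 2) * ∫ t, ‖h t‖ := by
    refine (hΘ hh.integrable hh.support_subset hh.integral_eq_zero hp hfar).trans ?_
    rw [pow_one]
    gcongr ?_ * _
    rw [div_le_div_iff₀ (by positivity) (by positivity)]
    calc C * p.1 * boxScale p ^ (d + 2) ≤ C * p.1 * (2 * (p.1 + ‖p.2‖)) ^ (d + 2) := by gcongr
      _ = C * 2 ^ (d + 2) * p.1 * (p.1 + ‖p.2‖) ^ (d + 1 + 1) := by rw [mul_pow]; ring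
  calc _ ≤ (C * 2 ^ (d + 2) * p.1 / boxScale p ^ (d + 2) * ∫ t, ‖h t‖) ^ 2
        * boxScale p ^ (d + 1) := by gcongr
    _ = _ := by field_simp; ring

lemma exists_enorm_cnv_dil_sq_mul_boxScale_pow_le (Θ : 𝓢(Ed d, ℂ)) :
    ∃ K : ℝ≥0, ∀ ⦃h : Ed d → ℂ⦄, IsUnitAtom h → ∀ p : ℝ × Ed d, 0 < p.1 →
      ‖cnv d (dil d Θ p.1) h p.2‖ₑ ^ 2 * ENNReal.ofReal (boxScale p) ^ (d + 1)
        ≤ 3 ^ (d + 1) * ‖cnv d (dil d Θ p.1) h p.2‖ₑ ^ 2 + K * (∫⁻ t, ‖h t‖ₑ) ^ 2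
          * (‖p.1‖ₑ ^ 2 * (ENNReal.ofReal (boxScale p) ^ (d + 2 + 1))⁻¹) := by
  obtain ⟨K, hK⟩ := exists_norm_cnv_dil_sq_mul_boxScale_pow_le Θ
  refine ⟨K.toNNReal, fun h hh p hp ↦ ?_⟩
  have hb0 : 0 < boxScale p := zero_lt_one.trans_le (one_le_boxScale p)
  rcases lt_or_ge (p.1 + ‖p.2‖) 2 with near | far
  · refine le_trans ?_ le_self_add
    rw [mul_comm]
    gcongr
    rw [← ENNReal.ofReal_ofNat]
    exact ENNReal.ofReal_le_ofReal (by rw [boxScale, abs_of_pos hp]; linarith)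
  · refine le_trans ?_ le_add_self
    have := ENNReal.ofReal_le_ofReal (hK hh p hp far)
    rwa [ENNReal.ofReal_mul (by positivity), ENNReal.ofReal_mul' (by positivity),
      ENNReal.ofReal_mul' (by positivity), ENNReal.ofReal_mul (by positivity),
      ENNReal.ofReal_inv_of_pos (by positivity), ENNReal.ofReal_pow (norm_nonneg _),
      ENNReal.ofReal_pow hb0.le, ENNReal.ofReal_pow hb0.le, ENNReal.ofReal_pow hp.le,
      ENNReal.ofReal_pow (by positivity), ofReal_norm,
      ofReal_integral_norm_eq_lintegral_enorm hh.integrable, ← Real.enorm_of_nonneg hp.le] at this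

theorem exists_lintegral_enorm_cnv_dil_sq_mul_boxScale_le (Θ : 𝓢(Ed d, ℂ))
    (hΘ : ∫ x, Θ x = 0) : ∃ C : ℝ≥0, ∀ ⦃h : Ed d → ℂ⦄, IsUnitAtom h →
      ∫⁻ p, ‖cnv d (dil d Θ p.1) h p.2‖ₑ ^ 2 * ENNReal.ofReal (boxScale p) ^ (d + 1)
        ∂halfSpaceMeasure d ≤ C * ∫⁻ t, ‖h t‖ₑ ^ 2 := by
  obtain ⟨A, hA⟩ := exists_lintegral_enorm_cnv_dil_sq_le Θ hΘ
  obtain ⟨K, hK⟩ := exists_enorm_cnv_dil_sq_mul_boxScale_pow_le Θ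
  set V := volume (ball (0 : Ed d) 1)
  have hV : (V.toNNReal : ℝ≥0∞) = V := ENNReal.coe_toNNReal measure_ball_lt_top.ne
  refine ⟨3 ^ (d + 1) * A + K * V.toNNReal * (V.toNNReal * 2 ^ (d + 2 + 1)), fun h hh ↦ ?_⟩
  have far_integral := lintegral_mul_inv_boxScale_pow_le (G := fun p ↦ ‖p.1‖ₑ ^ 2) (by fun_prop)
    fun R hR ↦ setLIntegral_carlesonBox_enorm_fst_sq_le d hR
  have meas := (measurable_cnv_dil Θ.continuous.measurable hh.measurable).enorm.pow_const 2
  calc _ ≤ 3 ^ (d + 1) * (∫⁻ p, ‖cnv d (dil d Θ p.1) h p.2‖ₑ ^ 2 ∂halfSpaceMeasure d)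
        + K * (∫⁻ t, ‖h t‖ₑ) ^ 2 * ∫⁻ p, ‖p.1‖ₑ ^ 2
          * (ENNReal.ofReal (boxScale p) ^ (d + 2 + 1))⁻¹ ∂halfSpaceMeasure d := by
        have := continuous_boxScale (d := d)
        rw [← lintegral_const_mul _ meas, ← lintegral_const_mul _ (by fun_prop),
          ← lintegral_add_left (meas.const_mul _)]
        exact lintegral_mono_ae ((ae_halfSpaceMeasure_pos d).mono fun p hp ↦ hK hh p hp)
    _ ≤ 3 ^ (d + 1) * (A * ∫⁻ t, ‖h t‖ₑ ^ 2)
        + K * (V * ∫⁻ t, ‖h t‖ₑ ^ 2) * (V * 2 ^ (d + 2 + 1)) := by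
        gcongr
        · exact hA h hh.measurable hh.integrable hh.memLp_two
        · exact sq_lintegral_enorm_le hh.measurable hh.support_subset
    _ = _ := by
        push_cast
        rw [hV]
        ring

end Cancellation

section ScaleLimits

variable {d : ℕ} {f h : Ed d → ℂ}

lemma Admissible.integrable_mul_cnv_dil (hf : Admissible f) (p : 𝓢(Ed d, ℂ)) (hh : Integrable h)
    (hsupp : Function.support h ⊆ ball 0 1) {ε : ℝ} (hε : 0 < ε) :
    Integrable fun t ↦ f t * cnv d (dil d p ε) h t := by
  have := (integrable_dil_sub_mul p hf hh hsupp hε).integral_prod_left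
  simpa only [cnv, ← integral_const_mul, mul_left_comm] using this

lemma Admissible.integrable_mul (hf : Admissible f) (hh : MemLp h 2)
    (hsupp : Function.support h ⊆ ball 0 1) : Integrable fun t ↦ f t * h t := by
  refine ((hf.memLp_indicator_ball zero_le_one).integrable_mul hh).congr (.of_forall fun t ↦ ?_)
  by_cases ht : t ∈ ball (0 : Ed d) 1
  · rw [Pi.mul_apply, indicator_of_mem ht]
  · simp only [Pi.mul_apply, Function.notMem_support.1 fun hs ↦ ht (hsupp hs), mul_zero]

lemma Admissible.tendsto_integral_mul_cnv_dil_atTop (hf : Admissible f) (p : 𝓢(Ed d, ℂ))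
    (hh : Integrable h) (hsupp : Function.support h ⊆ ball 0 1) (h0 : ∫ t, h t = 0) :
    Tendsto (fun R ↦ ∫ t, f t * cnv d (dil d p R) h t) atTop (𝓝 0) := by
  obtain ⟨C, hC, hp⟩ := exists_norm_cnv_dil_le_of_integral_eq_zero p 0
  have decay {R : ℝ} (hR : 2 ≤ R) (t : Ed d) :
      ‖f t * cnv d (dil d p R) h t‖ ≤ ‖f t‖ * (C / (R + ‖t‖) ^ (d + 1) * ∫ t, ‖h t‖) := by
    rw [norm_mul]
    gcongr
    simpa using hp hh hsupp h0 (by linarith) (by linarith [norm_nonneg t])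
  rw [← integral_zero (Ed d) ℂ]
  refine tendsto_integral_filter_of_dominated_convergence
    (fun t ↦ C * (∫ t, ‖h t‖) * (‖f t‖ * poissonWeight t)) ?_ ?_
    (hf.integrable_norm_mul_poissonWeight.const_mul _) (.of_forall fun t ↦ ?_)
  · filter_upwards [eventually_gt_atTop 0] with R hR
    exact (hf.integrable_mul_cnv_dil p hh hsupp hR).1
  · filter_upwards [eventually_ge_atTop 2] with R hR
    refine .of_forall fun t ↦ (decay hR t).trans ?_
    calc _ ≤ ‖f t‖ * (C / (1 + ‖t‖) ^ (d + 1) * ∫ t, ‖h t‖) := by gcongr; linarith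
      _ = _ := by rw [poissonWeight]; ring
  · have denominator : Tendsto (fun R : ℝ ↦ (R + ‖t‖) ^ (d + 1)) atTop atTop :=
      (tendsto_pow_atTop d.succ_ne_zero).comp (tendsto_atTop_add_const_right _ _ tendsto_id)
    have bound := ((tendsto_const_nhds (x := C)).div_atTop denominator).mul_const
      (∫ t, ‖h t‖) |>.const_mul ‖f t‖
    rw [zero_mul, mul_zero] at bound
    exact squeeze_zero_norm' ((eventually_ge_atTop 2).mono fun R hR ↦ decay hR t) bound

lemma tendsto_lintegral_enorm_mul_enorm_zero {α ι E F : Type*} [MeasurableSpace α]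
    [NormedAddCommGroup E] [NormedAddCommGroup F] {μ : Measure α} {l : Filter ι} {u : α → E}
    {v : ι → α → F} (hu : MemLp u 2 μ) (hv : ∀ i, AEStronglyMeasurable (v i) μ)
    (hlim : Tendsto (fun i ↦ ∫⁻ x, ‖v i x‖ₑ ^ 2 ∂μ) l (𝓝 0)) :
    Tendsto (fun i ↦ ∫⁻ x, ‖u x‖ₑ * ‖v i x‖ₑ ∂μ) l (𝓝 0) := by
  have squares : Tendsto (fun i ↦ (∫⁻ x, ‖u x‖ₑ * ‖v i x‖ₑ ∂μ) ^ 2) l (𝓝 0) := by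
    refine tendsto_of_tendsto_of_tendsto_of_le_of_le tendsto_const_nhds ?_ (fun _ ↦ zero_le)
      fun i ↦ lintegral_mul_sq_le hu.1.enorm (hv i).enorm
    simpa using ENNReal.Tendsto.const_mul hlim (.inr (lintegral_enorm_sq_lt_top hu).ne)
  have := ((ENNReal.continuous_rpow_const (y := 2⁻¹)).tendsto 0).comp squares
  simpa only [Function.comp_def, ← ENNReal.rpow_natCast_mul, Nat.cast_ofNat,
    mul_inv_cancel₀ (two_ne_zero' ℝ), ENNReal.rpow_one,
    ENNReal.zero_rpow_of_pos (inv_pos.2 (zero_lt_two' ℝ))] using this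

lemma exists_norm_cnv_dil_le_poissonWeight (p : 𝓢(Ed d, ℂ)) (hh : Integrable h)
    (hsupp : Function.support h ⊆ ball 0 1) :
    ∃ K, ∀ (ε : ℝ) (t : Ed d), 0 < ε → 2 ≤ ‖t‖ →
      ‖cnv d (dil d p ε) h t‖ ≤ ε * (K * poissonWeight t) := by
  obtain ⟨C, -, hp⟩ := exists_norm_dil_le_poissonWeight p
  refine ⟨C * 3 ^ (d + 1) * ∫ t, ‖h t‖, fun ε t hε ht ↦ ?_⟩
  refine (norm_cnv_le (C := C * 3 ^ (d + 1) * ε * poissonWeight t) (fun u hu ↦ ?_) hh).trans_eq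
    (by ring)
  have hu1 : ‖u‖ < 1 := mem_ball_zero_iff.1 (hsupp hu)
  exact hp 3 ε _ _ hε (by linarith [norm_le_norm_add_norm_sub u t, norm_sub_rev t u])

lemma Admissible.tendsto_setLIntegral_compl_ball_enorm_mul_cnv_dil (hf : Admissible f)
    (p : 𝓢(Ed d, ℂ)) (hh : Integrable h) (hsupp : Function.support h ⊆ ball 0 1) :
    Tendsto (fun δ ↦ ∫⁻ t in (ball 0 2)ᶜ, ‖f t‖ₑ * ‖cnv d (dil d p δ) h t - h t‖ₑ)
      (𝓝[>] 0) (𝓝 0) := by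
  obtain ⟨K, hK⟩ := exists_norm_cnv_dil_le_poissonWeight p hh hsupp
  set J := ∫⁻ t, ENNReal.ofReal (K * (‖f t‖ * poissonWeight t))
  have hJ : J ≠ ∞ := (hf.integrable_norm_mul_poissonWeight.const_mul K).lintegral_lt_top.ne
  have bound {δ : ℝ} (hδ : 0 < δ) :
      ∫⁻ t in (ball 0 2)ᶜ, ‖f t‖ₑ * ‖cnv d (dil d p δ) h t - h t‖ₑ ≤ ENNReal.ofReal δ * J := by
    rw [← lintegral_const_mul' _ _ ENNReal.ofReal_ne_top]
    refine (setLIntegral_mono' measurableSet_ball.compl fun t ht ↦ ?_).trans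
      (setLIntegral_le_lintegral _ _)
    have ht2 : 2 ≤ ‖t‖ := by simpa using ht
    have ht1 : h t = 0 := Function.notMem_support.1 fun hs ↦ by
      linarith [mem_ball_zero_iff.1 (hsupp hs)]
    rw [ht1, sub_zero, ← enorm_mul, ← ofReal_norm, ← ENNReal.ofReal_mul hδ.le, norm_mul]
    refine ENNReal.ofReal_le_ofReal ?_
    calc _ ≤ ‖f t‖ * (δ * (K * poissonWeight t)) := by gcongr; exact hK δ t hδ ht2
      _ = _ := by ring
  have to_zero : Tendsto (fun δ ↦ ENNReal.ofReal δ * J) (𝓝[>] 0) (𝓝 0) := by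
    have := ENNReal.Tendsto.mul_const (ENNReal.tendsto_ofReal (tendsto_id (x := 𝓝 (0 : ℝ))))
      (.inr hJ)
    rw [ENNReal.ofReal_zero, zero_mul] at this
    exact this.mono_left nhdsWithin_le_nhds
  exact tendsto_of_tendsto_of_tendsto_of_le_of_le' tendsto_const_nhds to_zero
    (.of_forall fun _ ↦ zero_le) (eventually_mem_nhdsWithin.mono fun _ ↦ bound)

lemma Admissible.tendsto_integral_mul_cnv_dil_zero (hf : Admissible f) (p : 𝓢(Ed d, ℂ))
    (hp : ∫ x, p x = 1) (hm : Measurable h) (hh : MemLp h 2)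
    (hsupp : Function.support h ⊆ ball 0 1) :
    Tendsto (fun δ ↦ ∫ t, f t * cnv d (dil d p δ) h t) (𝓝[>] 0) (𝓝 (∫ t, f t * h t)) := by
  have h1 : Integrable h := integrable_of_memLp_two hh hsupp measure_ball_lt_top.ne
  have meas (δ : ℝ) : Measurable fun t ↦ cnv d (dil d p δ) h t - h t :=
    ((measurable_cnv_dil p.continuous.measurable hm).comp measurable_prodMk_left).sub hm
  have near : Tendsto (fun δ ↦ ∫⁻ t in ball 0 2, ‖f t‖ₑ * ‖cnv d (dil d p δ) h t - h t‖ₑ)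
      (𝓝[>] 0) (𝓝 0) := by
    refine tendsto_lintegral_enorm_mul_enorm_zero
      ((memLp_indicator_iff_restrict measurableSet_ball).1 (hf.memLp_indicator_ball zero_le_two))
      (fun δ ↦ (meas δ).aestronglyMeasurable) ?_
    exact tendsto_of_tendsto_of_tendsto_of_le_of_le tendsto_const_nhds
      (tendsto_lintegral_enorm_cnv_dil_sub_sq p hp h1 hh) (fun _ ↦ zero_le)
      fun _ ↦ setLIntegral_le_lintegral _ _
  have far := hf.tendsto_setLIntegral_compl_ball_enorm_mul_cnv_dil p h1 hsupp
  have total := near.add far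
  simp only [add_zero, lintegral_add_compl _ measurableSet_ball] at total
  rw [tendsto_iff_edist_tendsto_0]
  refine tendsto_of_tendsto_of_tendsto_of_le_of_le' tendsto_const_nhds total
    (.of_forall fun _ ↦ zero_le) ?_
  filter_upwards [self_mem_nhdsWithin] with δ hδ
  rw [edist_eq_enorm_sub, ← integral_sub (hf.integrable_mul_cnv_dil p h1 hsupp hδ)
    (hf.integrable_mul hh hsupp)]
  simp only [← mul_sub, ← enorm_mul]
  exact enorm_integral_le_lintegral_enorm _

end ScaleLimits

section AtomPairing

variable {d : ℕ}

lemma exists_enorm_setIntegral_cnv_mul_cnv_sq_le (Φ Ψ : 𝓢(Ed d, ℂ)) (hΦ : ∫ x, Φ x = 0)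
    (hΨ : ∫ x, Ψ x = 0) :
    ∃ C : ℝ≥0, ∀ ⦃f h : Ed d → ℂ⦄ ⦃N : ℝ⦄, Admissible f → CarlesonBoundAt Φ f N 0 →
      IsUnitAtom h → ∀ S : Set (ℝ × Ed d),
        ‖∫ q in S, cnv d (dil d Φ q.1) f q.2 * cnv d (dil d Ψ q.1) h q.2 ∂halfSpaceMeasure d‖ₑ ^ 2
          ≤ C * ENNReal.ofReal (N ^ 2) * ∫⁻ t, ‖h t‖ₑ ^ 2 := by
  obtain ⟨A, hA⟩ := exists_lintegral_enorm_cnv_dil_sq_mul_inv_boxScale_le Φ hΦ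
  obtain ⟨B, hB⟩ := exists_lintegral_enorm_cnv_dil_sq_mul_boxScale_le Ψ hΨ
  refine ⟨A * B, fun f h N hf hN hh S ↦ ?_⟩
  have hb (p : ℝ × Ed d) : 0 < boxScale p := zero_lt_one.trans_le (one_le_boxScale p)
  have mf := (measurable_cnv_dil Φ.continuous.measurable hf.measurable).enorm
  have mh := (measurable_cnv_dil Ψ.continuous.measurable hh.measurable).enorm
  have mb : Measurable fun p : ℝ × Ed d ↦ ENNReal.ofReal (boxScale p) ^ (d + 1) :=
    continuous_boxScale.measurable.ennreal_ofReal.pow_const _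
  calc _ ≤ (∫⁻ p, ‖cnv d (dil d Φ p.1) f p.2‖ₑ * ‖cnv d (dil d Ψ p.1) h p.2‖ₑ
        ∂halfSpaceMeasure d) ^ 2 := by
        gcongr
        refine (enorm_integral_le_lintegral_enorm _).trans ?_
        simp only [enorm_mul]
        exact setLIntegral_le_lintegral _ _
    _ ≤ (A * ENNReal.ofReal (N ^ 2)) * (B * ∫⁻ t, ‖h t‖ₑ ^ 2) := by
        refine (lintegral_mul_sq_le_of_weight mf.aemeasurable mh.aemeasurable mb.aemeasurable
          (fun p ↦ ?_) fun p ↦ by finiteness).trans (mul_le_mul' (hA f N hf hN) (hB hh))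
        exact pow_ne_zero _ (ENNReal.ofReal_pos.2 (hb p)).ne'
    _ = _ := by push_cast; ring

theorem exists_enorm_integral_mul_sq_le (Φ : 𝓢(Ed d, ℂ)) (hΦ0 : ∫ x, Φ x = 0)
    (hΦ : ∀ ξ, ξ ≠ 0 → ∃ ε : ℝ, 0 < ε ∧ 𝓕 Φ (ε • ξ) ≠ 0) :
    ∃ C : ℝ≥0, ∀ ⦃f h : Ed d → ℂ⦄ ⦃N : ℝ⦄, Admissible f → CarlesonBoundAt Φ f N 0 →
      IsUnitAtom h →
        ‖∫ t, f t * h t‖ₑ ^ 2 ≤ C * ENNReal.ofReal (N ^ 2) * ∫⁻ t, ‖h t‖ₑ ^ 2 := by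
  obtain ⟨Ψ, p, hΨ, hp, reproduce⟩ := exists_slab_pairing_eq Φ hΦ
  obtain ⟨C, hC⟩ := exists_enorm_setIntegral_cnv_mul_cnv_sq_le Φ Ψ hΦ0 hΨ
  refine ⟨C, fun f h N hf hN hh ↦ ?_⟩
  have continuous_sq : Continuous fun z : ℂ ↦ ‖z‖ₑ ^ 2 := by fun_prop
  have at_scale {δ : ℝ} (hδ : 0 < δ) : ‖∫ t, f t * cnv d (dil d p δ) h t‖ₑ ^ 2
      ≤ C * ENNReal.ofReal (N ^ 2) * ∫⁻ t, ‖h t‖ₑ ^ 2 := by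
    have lim := (hf.tendsto_integral_mul_cnv_dil_atTop p hh.integrable hh.support_subset
      hh.integral_eq_zero).const_sub (∫ t, f t * cnv d (dil d p δ) h t)
    rw [sub_zero] at lim
    refine le_of_tendsto ((continuous_sq.tendsto _).comp lim) ?_
    filter_upwards [eventually_ge_atTop δ] with R hR
    rw [Function.comp_apply, ← reproduce hf hh.integrable hh.support_subset hδ hR]
    exact hC hf hN hh _
  exact le_of_tendsto ((continuous_sq.tendsto _).comp (hf.tendsto_integral_mul_cnv_dil_zero p hp
    hh.measurable hh.memLp_two hh.support_subset))
    (eventually_mem_nhdsWithin.mono fun _ hδ ↦ at_scale hδ)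

end AtomPairing

section UnitBall

variable {d : ℕ} {f : Ed d → ℂ}

lemma toReal_volume_ball_pos (z : Ed d) {r : ℝ} (hr : 0 < r) : 0 < (volume (ball z r)).toReal :=
  ENNReal.toReal_pos (measure_ball_pos _ _ hr).ne' measure_ball_lt_top.ne

/-- The atom that detects the oscillation of `f` on the unit ball: integrating `f` against it gives
the integral of `|f - f_B|²` over `B = ball 0 1`. -/
def oscillationAtom (f : Ed d → ℂ) : Ed d → ℂ :=
  (ball 0 1).indicator fun t ↦ starRingEnd ℂ (f t - avgB d f 0 1)

lemma integral_norm_oscillationAtom_sq (f : Ed d → ℂ) :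
    ∫ t, ‖oscillationAtom f t‖ ^ 2 = ∫ t in ball 0 1, ‖f t - avgB d f 0 1‖ ^ 2 := by
  rw [← integral_indicator measurableSet_ball]
  congr 1 with t
  by_cases ht : t ∈ ball (0 : Ed d) 1
  · simp only [oscillationAtom, indicator_of_mem ht, RCLike.norm_conj]
  · simp only [oscillationAtom, indicator_of_notMem ht, norm_zero, zero_pow two_ne_zero]

lemma Admissible.integrableOn_unitBall (hf : Admissible f) : IntegrableOn f (ball 0 1) :=
  (integrable_indicator_iff measurableSet_ball).1 <| integrable_of_memLp_two
    (hf.memLp_indicator_ball zero_le_one) support_indicator_subset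
    measure_ball_lt_top.ne

lemma Admissible.memLp_oscillationAtom (hf : Admissible f) : MemLp (oscillationAtom f) 2 := by
  have on_ball : MemLp f 2 (volume.restrict (ball 0 1)) :=
    (memLp_indicator_iff_restrict measurableSet_ball).1 (hf.memLp_indicator_ball zero_le_one)
  have : IsFiniteMeasure (volume.restrict (ball (0 : Ed d) 1)) :=
    ⟨by simpa using measure_ball_lt_top⟩
  exact (memLp_indicator_iff_restrict measurableSet_ball).2
    (on_ball.sub (memLp_const (avgB d f 0 1))).star

lemma Admissible.integral_oscillationAtom (hf : Admissible f) : ∫ t, oscillationAtom f t = 0 := by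
  have hV := toReal_volume_ball_pos (0 : Ed d) one_pos
  rw [oscillationAtom, integral_indicator measurableSet_ball, integral_conj,
    integral_sub hf.integrableOn_unitBall (integrableOn_const measure_ball_lt_top.ne),
    setIntegral_const, avgB, Measure.real, smul_inv_smul₀ hV.ne', sub_self, map_zero]

lemma Admissible.isUnitAtom_oscillationAtom (hf : Admissible f) :
    IsUnitAtom (oscillationAtom f) where
  measurable := (Complex.continuous_conj.measurable.comp
    (hf.measurable.sub_const _)).indicator measurableSet_ball
  memLp_two := hf.memLp_oscillationAtom
  support_subset := support_indicator_subset
  integral_eq_zero := hf.integral_oscillationAtom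

lemma mul_oscillationAtom (f : Ed d → ℂ) (t : Ed d) :
    f t * oscillationAtom f t
      = ((‖oscillationAtom f t‖ ^ 2 : ℝ) : ℂ) + avgB d f 0 1 * oscillationAtom f t := by
  by_cases ht : t ∈ ball (0 : Ed d) 1
  · rw [oscillationAtom, indicator_of_mem ht, RCLike.norm_conj, ← sub_eq_iff_eq_add, ← sub_mul,
      Complex.mul_conj']
    push_cast
    rfl
  · simp [oscillationAtom, indicator_of_notMem ht]

lemma Admissible.integral_mul_oscillationAtom (hf : Admissible f) :
    ∫ t, f t * oscillationAtom f t = ((∫ t, ‖oscillationAtom f t‖ ^ 2 : ℝ) : ℂ) := by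
  have atom := hf.isUnitAtom_oscillationAtom
  have squares : Integrable fun t ↦ ((‖oscillationAtom f t‖ ^ 2 : ℝ) : ℂ) :=
    ((memLp_two_iff_integrable_sq_norm atom.memLp_two.1).1 atom.memLp_two).ofReal
  simp only [mul_oscillationAtom]
  rw [integral_add squares (atom.integrable.const_mul _), integral_const_mul,
    atom.integral_eq_zero, mul_zero, add_zero]
  exact integral_ofReal

theorem exists_setIntegral_unitBall_norm_sub_avgB_sq_le (Φ : 𝓢(Ed d, ℂ)) (hΦ0 : ∫ x, Φ x = 0)
    (hΦ : ∀ ξ, ξ ≠ 0 → ∃ ε : ℝ, 0 < ε ∧ 𝓕 Φ (ε • ξ) ≠ 0) :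
    ∃ C : ℝ, 0 < C ∧ ∀ ⦃f : Ed d → ℂ⦄ ⦃N : ℝ⦄, Admissible f → CarlesonBoundAt Φ f N 0 →
      ∫ t in ball 0 1, ‖f t - avgB d f 0 1‖ ^ 2 ≤ C * N ^ 2 := by
  obtain ⟨C, hC⟩ := exists_enorm_integral_mul_sq_le Φ hΦ0 hΦ
  refine ⟨C + 1, by positivity, fun f N hf hN ↦ ?_⟩
  have pairing := hC hf hN hf.isUnitAtom_oscillationAtom
  rw [lintegral_enorm_sq_eq_ofReal hf.memLp_oscillationAtom, hf.integral_mul_oscillationAtom,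
    integral_norm_oscillationAtom_sq] at pairing
  set J := ∫ t in ball 0 1, ‖f t - avgB d f 0 1‖ ^ 2
  have hJ : 0 ≤ J := integral_nonneg fun t ↦ sq_nonneg _
  have self_bound : J ^ 2 ≤ C * N ^ 2 * J := by
    rwa [← ofReal_norm, Complex.norm_real, Real.norm_of_nonneg hJ, ← ENNReal.ofReal_pow hJ,
      ← ENNReal.ofReal_coe_nnreal, ← ENNReal.ofReal_mul C.coe_nonneg,
      ← ENNReal.ofReal_mul (by positivity), ENNReal.ofReal_le_ofReal_iff (by positivity)]
      at pairing
  rcases hJ.eq_or_lt with hJ0 | hJ0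
  · rw [← hJ0]
    positivity
  · have := le_of_mul_le_mul_right ((sq J).symm.trans_le self_bound) hJ0
    linarith [sq_nonneg N]

end UnitBall

section Rescaling

variable {d : ℕ} {r : ℝ} {f : Ed d → ℂ}

lemma integral_comp_add_smul {F : Type*} [NormedAddCommGroup F] [NormedSpace ℝ F] (z : Ed d)
    (hr : 0 < r) (u : Ed d → F) : ∫ t, u (z + r • t) = (r ^ d)⁻¹ • ∫ t, u t := by
  rw [Measure.integral_comp_smul volume (fun x ↦ u (z + x)) r, integral_add_left_eq_self u z,
    finrank_euclideanSpace_fin, abs_of_pos (by positivity)]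

lemma setIntegral_ball_comp_add_smul {F : Type*} [NormedAddCommGroup F] [NormedSpace ℝ F]
    (z : Ed d) (hr : 0 < r) (ρ : ℝ) (u : Ed d → F) :
    ∫ t in ball 0 ρ, u (z + r • t) = (r ^ d)⁻¹ • ∫ t in ball z (r * ρ), u t := by
  rw [← integral_indicator measurableSet_ball, ← integral_indicator measurableSet_ball,
    ← integral_comp_add_smul z hr]
  have mem_iff (t : Ed d) : z + r • t ∈ ball z (r * ρ) ↔ t ∈ ball (0 : Ed d) ρ := by
    simp [norm_smul, abs_of_pos hr, hr]
  classical
  simp only [indicator_apply, mem_iff]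

lemma toReal_volume_ball_mul (z : Ed d) (hr : 0 < r) (ρ : ℝ) :
    (volume (ball z (r * ρ))).toReal = r ^ d * (volume (ball (0 : Ed d) ρ)).toReal := by
  rw [Measure.addHaar_ball_mul_of_pos _ _ hr, ENNReal.toReal_mul, finrank_euclideanSpace_fin,
    ENNReal.toReal_ofReal (by positivity)]

lemma avgB_comp_add_smul (f : Ed d → ℂ) (z : Ed d) (hr : 0 < r) :
    avgB d (fun t ↦ f (z + r • t)) 0 1 = avgB d f z r := by
  have hV := toReal_volume_ball_mul z hr 1
  have hI := setIntegral_ball_comp_add_smul z hr 1 f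
  rw [mul_one] at hV hI
  rw [avgB, avgB, hV, hI, smul_smul, mul_inv_rev]

lemma mul_setIntegral_unitBall_comp_add_smul (f : Ed d → ℂ) (z : Ed d) (hr : 0 < r) :
    (volume (ball (0 : Ed d) 1)).toReal⁻¹ * ∫ t in ball 0 1,
        ‖f (z + r • t) - avgB d (fun t ↦ f (z + r • t)) 0 1‖ ^ 2
      = (volume (ball z r)).toReal⁻¹ * ∫ t in ball z r, ‖f t - avgB d f z r‖ ^ 2 := by
  have hV := toReal_volume_ball_mul z hr 1
  have hI := setIntegral_ball_comp_add_smul z hr 1 fun t ↦ ‖f t - avgB d f z r‖ ^ 2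
  rw [mul_one] at hV hI
  rw [avgB_comp_add_smul f z hr, hV, hI, smul_eq_mul, mul_inv_rev, mul_assoc]

lemma dil_mul_smul (g : Ed d → ℂ) (hr : r ≠ 0) (ε : ℝ) (x : Ed d) :
    dil d g (r * ε) (r • x) = ((r : ℂ) ^ d)⁻¹ * dil d g ε x := by
  rw [dil, dil, smul_smul, mul_inv, mul_right_comm, inv_mul_cancel₀ hr, one_mul]
  push_cast
  rw [mul_pow, mul_inv, mul_assoc]

lemma cnv_dil_comp_add_smul (g f : Ed d → ℂ) (z : Ed d) (hr : 0 < r) (ε : ℝ) (s : Ed d) :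
    cnv d (dil d g ε) (fun t ↦ f (z + r • t)) s = cnv d (dil d g (r * ε)) f (z + r • s) := by
  have hrd : (r : ℂ) ^ d ≠ 0 := pow_ne_zero _ (ofReal_ne_zero.2 hr.ne')
  have change_variables :=
    integral_comp_add_smul z hr fun t ↦ dil d g (r * ε) (z + r • s - t) * f t
  simp only [add_sub_add_left_eq_sub, ← smul_sub, dil_mul_smul g hr.ne', mul_assoc,
    integral_const_mul, Complex.real_smul, ofReal_inv, ofReal_pow] at change_variables
  exact mul_left_cancel₀ (inv_ne_zero hrd) change_variables

lemma Admissible.comp_add_smul (hf : Admissible f) (z : Ed d) (hr : 0 < r) :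
    Admissible fun t ↦ f (z + r • t) := by
  have hm : Measurable fun t ↦ f (z + r • t) := hf.measurable.comp (by fun_prop)
  refine ⟨hm, ((((hf.integrable_sq.comp_add_left z).comp_smul hr.ne').const_mul
    ((1 + ‖z‖ + r) ^ (d + 1))).mono' ((hm.norm.pow_const 2).div (by fun_prop)).aestronglyMeasurable
    (.of_forall fun t ↦ ?_))⟩
  have comparison : 1 + ‖z + r • t‖ ≤ (1 + ‖z‖ + r) * (1 + ‖t‖) := by
    have := norm_add_le z (r • t)
    rw [norm_smul, Real.norm_of_nonneg hr.le] at this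
    nlinarith [norm_nonneg t, norm_nonneg z, mul_nonneg (norm_nonneg z) (norm_nonneg t)]
  rw [Real.norm_of_nonneg (by positivity), ← mul_div_assoc,
    div_le_div_iff₀ (by positivity) (by positivity)]
  calc _ ≤ ‖f (z + r • t)‖ ^ 2 * ((1 + ‖z‖ + r) * (1 + ‖t‖)) ^ (d + 1) := by gcongr
    _ = _ := by rw [mul_pow]; ring

lemma setIntegral_Ioc_comp_mul_div (u : ℝ → ℝ) (hr : 0 < r) {ρ : ℝ} (hρ : 0 ≤ ρ) :
    ∫ ε in Ioc 0 ρ, u (r * ε) / ε = ∫ ε in Ioc 0 (r * ρ), u ε / ε := by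
  rw [← intervalIntegral.integral_of_le hρ, ← intervalIntegral.integral_of_le (by positivity)]
  have := intervalIntegral.mul_integral_comp_mul_left (a := 0) (b := ρ) (f := fun ε ↦ u ε / ε) r
  rw [mul_zero] at this
  rw [← this, ← intervalIntegral.integral_const_mul]
  congr 1 with ε
  field_simp

lemma CarlesonBoundAt.comp_add_smul {Φ : Ed d → ℂ} {N : ℝ} {z : Ed d}
    (hN : CarlesonBoundAt Φ f N z) (hr : 0 < r) :
    CarlesonBoundAt Φ (fun t ↦ f (z + r • t)) N 0 := by
  intro ρ hρ
  have inner_integral (s : Ed d) :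
      ∫ ε in Ioc 0 ρ, ‖cnv d (dil d Φ ε) (fun t ↦ f (z + r • t)) s‖ ^ 2 / ε
        = ∫ ε in Ioc 0 (r * ρ), ‖cnv d (dil d Φ ε) f (z + r • s)‖ ^ 2 / ε := by
    simp only [cnv_dil_comp_add_smul _ f z hr]
    exact setIntegral_Ioc_comp_mul_div (fun ε ↦ ‖cnv d (dil d Φ ε) f (z + r • s)‖ ^ 2) hr hρ.le
  have rescaled := setIntegral_ball_comp_add_smul z hr ρ fun s ↦
    ∫ ε in Ioc 0 (r * ρ), ‖cnv d (dil d Φ ε) f s‖ ^ 2 / ε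
  simp only [inner_integral]
  rw [rescaled, smul_eq_mul, inv_mul_le_iff₀ (by positivity), mul_left_comm,
    ← toReal_volume_ball_mul z hr]
  exact hN (r * ρ) (by positivity)

end Rescaling

end

/-- Scalar-valued converse direction of Theorem 3.2: if
`|Φ_ε*f(s)|² ds dε/ε` is a Carleson measure, then `f ∈ BMO` with square BMO
norm dominated by the Carleson norm. -/
theorem carleson_measure_gives_bmo
    (d : ℕ) (hd : 1 ≤ d) (Φ : SchwartzMap (Ed d) ℂ) (hΦ0 : ∫ s, Φ s = 0)
    (hΦnd : ∀ ξ : Ed d, ξ ≠ 0 → ∃ ε : ℝ, 0 < ε ∧ 𝓕 (fun s => Φ s) (ε • ξ) ≠ 0) :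
    ∃ C : ℝ, 0 < C ∧
      ∀ (N : ℝ), 0 ≤ N → ∀ f : Ed d → ℂ, Measurable f →
        Integrable (fun t : Ed d => ‖f t‖ ^ 2 / (1 + ‖t‖) ^ (d + 1)) volume →
        (∀ (z : Ed d) (r : ℝ), 0 < r →
          ∫ s in Metric.ball z r,
              ∫ ε in Set.Ioc (0 : ℝ) r, ‖cnv d (dil d (fun x => Φ x) ε) f s‖ ^ 2 / ε ≤
            N ^ 2 * (volume (Metric.ball z r)).toReal) →
        ∀ (z : Ed d) (r : ℝ), 0 < r →
          (volume (Metric.ball z r)).toReal⁻¹ *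
            ∫ t in Metric.ball z r, ‖f t - avgB d f z r‖ ^ 2 ≤ C * N ^ 2 := by
  obtain ⟨C, hC, unit_ball⟩ := exists_setIntegral_unitBall_norm_sub_avgB_sq_le Φ hΦ0 hΦnd
  have hV : 0 < (volume (Metric.ball (0 : Ed d) 1)).toReal := toReal_volume_ball_pos 0 one_pos
  refine ⟨(volume (Metric.ball (0 : Ed d) 1)).toReal⁻¹ * C, by positivity,
    fun N _ f hfm hfi hN z r hr ↦ ?_⟩
  have hf : Admissible f := ⟨hfm, hfi⟩
  have carleson : CarlesonBoundAt Φ f N z := hN z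
  rw [← mul_setIntegral_unitBall_comp_add_smul f z hr, mul_assoc]
  gcongr
  exact unit_ball (hf.comp_add_smul z hr) (carleson.comp_add_smul hr)
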